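/- arXiv:2601.00239 — 7 statements merged into one kernel-verified Lean document; each statement's English description precedes it below -/
import Mathlib

section
/- Let g(x) = g_{C_1}(x_{C_1}) + Σ_{k=2}^N (g_{C_k}(x_{C_k}) − x_{D_k}) be the gauge of a block geometric extremal graphical model in exponential margins, with cliques ordered by the running intersection property with singleton separators, and suppose every clique gauge has identity univariate marginals: for each clique C, each v ∈ C and each x_v ≥ 0, inf{ g_C(x_C) : x_u ≥ 0, u ∈ C ∖ {v} } = x_v. Fix vertices i ∈ C_1 and j, order the cliques so that j ∈ C_m with the shortest path from i to j given by {i, D_2, D_3, …, D_m, j}, where D_k ∈ C_{k−1} ∩ C_k for k = 2, …, m. Then the bivariate marginal gauge satisfies g_{{i,j}}(x_i, x_j) = inf over (x_{D_2}, …, x_{D_m}) ∈ [0,∞)^{m−1} of [ g_{{i,D_2}}(x_i, x_{D_2}) + Σ_{k=2}^{m−1} ( g_{{D_k,D_{k+1}}}(x_{D_k}, x_{D_{k+1}}) − x_{D_k} ) + g_{{D_m,j}}(x_{D_m}, x_j) − x_{D_m} ], where each bivariate function on the right is the bivariate marginal gauge of the corresponding clique gauge. That is, the bivariate marginal of a block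 geometric extremal graphical model may be computed solely from the chain graph along the unique shortest path between i and j. -/
/-!
Write `G n y = g_{C_1}(y) + ∑_{k=2}^n (g_{C_k}(y) - y_{D_k})`, so that `g = G N`.

Lower bound: every summand with `k > m` is nonnegative since `g_{C_k} ≥ max`, and for `k ≤ m`
each clique gauge dominates its bivariate marginal evaluated at the path coordinates of `y`.
Hence `g y` is at least the chain objective at `s k = y (D k)`.

Upper bound: given `s`, choose near-minimizers `z_k` of the bivariate infima for `k ≤ m`, and of
the univariate infima at the vertex `D k` for `k > m`; the latter contribute nearly
`y_{D_k} - y_{D_k} = 0`. By the running intersection property a configuration on the first `n`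
cliques and one on clique `n + 1` can be glued as soon as they agree at the single vertex
`D (n + 1)` (`glue`), so induction on `n` yields a global configuration whose gauge is as close
as desired to the chain objective.
-/

/-- Gluing across a singleton separator: `y` on the first `n` cliques and `z` on clique `n + 1`
extend to a common configuration if they agree at `D (n + 1)`, and the partial gauge sum gains
exactly the summand of `z`. -/
lemma glue {V : Type*} [DecidableEq V] (N : ℕ) (C : ℕ → Finset V) (D : ℕ → V)
    (hRIP : ∀ k, 2 ≤ k → k ≤ N → C k ∩ (Finset.Icc 1 (k-1)).biUnion C = {D k})
    (gC : ℕ → (V → ℝ) → ℝ)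
    (hloc : ∀ k, 1 ≤ k → k ≤ N → ∀ x y : V → ℝ, (∀ w ∈ C k, x w = y w) → gC k x = gC k y)
    (n : ℕ) (hn : 1 ≤ n) (hnN : n + 1 ≤ N) (y z : V → ℝ)
    (hy : ∀ q, 0 ≤ y q) (hz : ∀ q, 0 ≤ z q) (hyz : z (D (n+1)) = y (D (n+1))) :
    ∃ x : V → ℝ, (∀ q, 0 ≤ x q) ∧
      (∀ k, 1 ≤ k → k ≤ n → ∀ w ∈ C k, x w = y w) ∧ (∀ w ∈ C (n+1), x w = z w) ∧
      gC 1 x + ∑ k ∈ Finset.Icc 2 (n+1), (gC k x - x (D k)) =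
        gC 1 y + ∑ k ∈ Finset.Icc 2 n, (gC k y - y (D k)) + (gC (n+1) z - z (D (n+1))) := by
  classical
  have hDC : ∀ k, 2 ≤ k → k ≤ N → D k ∈ C k := fun k h2 hk => by
    have : D k ∈ C k ∩ (Finset.Icc 1 (k-1)).biUnion C := by simp [hRIP k h2 hk]
    exact (Finset.mem_inter.1 this).1
  obtain ⟨x, hx⟩ : ∃ x : V → ℝ,
      ∀ w, x w = if w ∈ (Finset.Icc 1 n).biUnion C then y w else z w := ⟨_, fun _ => rfl⟩
  have h1 : ∀ k, 1 ≤ k → k ≤ n → ∀ w ∈ C k, x w = y w := fun k h1 hk w hw => by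
    rw [hx, if_pos]
    exact Finset.mem_biUnion.2 ⟨k, Finset.mem_Icc.2 ⟨h1, hk⟩, hw⟩
  have h2 : ∀ w ∈ C (n+1), x w = z w := fun w hw => by
    rw [hx]
    split_ifs with h
    · have hR := hRIP (n+1) (by omega) hnN
      rw [Nat.add_sub_cancel] at hR
      have hm : w ∈ C (n+1) ∩ (Finset.Icc 1 n).biUnion C := Finset.mem_inter.2 ⟨hw, h⟩
      rw [hR, Finset.mem_singleton] at hm
      rw [hm, hyz]
    · rfl
  refine ⟨x, fun q => ?_, h1, h2, ?_⟩
  · rw [hx]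
    split_ifs
    exacts [hy q, hz q]
  · rw [Finset.sum_Icc_succ_top (by omega), hloc 1 le_rfl (by omega) x y (h1 1 le_rfl hn),
      hloc (n+1) (by omega) hnN x z h2, h2 _ (hDC (n+1) (by omega) hnN), ← add_assoc]
    congr 2
    refine Finset.sum_congr rfl fun k hk => ?_
    obtain ⟨hk2, hkn⟩ := Finset.mem_Icc.1 hk
    rw [hloc k (by omega) (by omega) x y (h1 k (by omega) hkn),
      h1 k (by omega) hkn _ (hDC k hk2 (by omega))]

/-- **Lemma 2**: for a block geometric extremal graphical model in exponential margins
whose clique gauges have identity univariate marginals, the bivariate marginal gauge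
`g_{{i,j}}` may be computed solely from the chain along the unique shortest path
`{i, D 2, …, D m, j}`: it equals the infimum over `(x_{D_2}, …, x_{D_m}) ∈ [0,∞)^{m−1}`
of `g_{{i,D₂}}(x_i, x_{D₂}) + Σ_{k=2}^{m−1} (g_{{D_k,D_{k+1}}}(x_{D_k}, x_{D_{k+1}}) −
x_{D_k}) + g_{{D_m,j}}(x_{D_m}, x_j) − x_{D_m}`, where each bivariate function on the
right is the bivariate marginal gauge of the corresponding clique gauge. -/
theorem stmt_12
    {V : Type*} [Fintype V] [DecidableEq V]
    (N : ℕ) (hN : 1 ≤ N)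
    (C : ℕ → Finset V) (D : ℕ → V)
    (hcover : ∀ w : V, ∃ k, 1 ≤ k ∧ k ≤ N ∧ w ∈ C k)
    (hRIP : ∀ k, 2 ≤ k → k ≤ N → C k ∩ (Finset.Icc 1 (k-1)).biUnion C = {D k})
    (gC : ℕ → (V → ℝ) → ℝ)
    (hloc : ∀ k, 1 ≤ k → k ≤ N → ∀ x y : V → ℝ, (∀ w ∈ C k, x w = y w) → gC k x = gC k y)
    (hmax : ∀ k, 1 ≤ k → k ≤ N → ∀ x : V → ℝ, (∀ w, 0 ≤ x w) → ∀ w ∈ C k, x w ≤ gC k x)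
    -- identity univariate marginals of the clique gauges (exponential margins)
    (hunit : ∀ k, 1 ≤ k → k ≤ N → ∀ w ∈ C k, ∀ c : ℝ, 0 ≤ c →
      sInf {r | ∃ y : V → ℝ, (∀ u, 0 ≤ y u) ∧ y w = c ∧ r = gC k y} = c)
    (g : (V → ℝ) → ℝ)
    (hg : ∀ x, g x = gC 1 x + ∑ k ∈ Finset.Icc 2 N, (gC k x - x (D k)))
    -- vertices i, j and the shortest path {i, D 2, …, D m, j} between them
    (i j : V) (m : ℕ) (hm : 2 ≤ m) (hmN : m ≤ N)
    (hi : i ∈ C 1) (hj : j ∈ C m)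
    (hDchain : ∀ k, 2 ≤ k → k ≤ m → D k ∈ C (k-1) ∧ D k ∈ C k)
    (pv : ℕ → V) (hpv0 : pv 0 = i) (hpvm : pv m = j)
    (hpvD : ∀ t, 1 ≤ t → t ≤ m - 1 → pv t = D (t+1))
    (hpvinj : ∀ s ≤ m, ∀ t ≤ m, pv s = pv t → s = t)
    -- bivariate marginal gauges of the clique gauges
    (bivC : ℕ → V → V → ℝ → ℝ → ℝ)
    (hbivC : ∀ k : ℕ, ∀ a b : V, ∀ u w : ℝ, bivC k a b u w =
      sInf {r | ∃ y : V → ℝ, (∀ q, 0 ≤ y q) ∧ y a = u ∧ y b = w ∧ r = gC k y})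
    (xi xj : ℝ) (hxi : 0 ≤ xi) (hxj : 0 ≤ xj) :
    sInf {r | ∃ y : V → ℝ, (∀ q, 0 ≤ y q) ∧ y i = xi ∧ y j = xj ∧ r = g y}
      = sInf {r | ∃ s : ℕ → ℝ, (∀ q, 0 ≤ s q) ∧
          r = bivC 1 i (D 2) xi (s 2)
            + (∑ k ∈ Finset.Icc 2 (m-1), (bivC k (D k) (D (k+1)) (s k) (s (k+1)) - s k))
            + bivC m (D m) j (s m) xj - s m} := by
  have hDC : ∀ k, 2 ≤ k → k ≤ N → D k ∈ C k := fun k h2 hk => by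
    have : D k ∈ C k ∩ (Finset.Icc 1 (k-1)).biUnion C := by simp [hRIP k h2 hk]
    exact (Finset.mem_inter.1 this).1
  -- the path vertices are pairwise distinct, so all bivariate constraint sets are nonempty
  have hij : i ≠ j := fun h => by
    have := hpvinj 0 (by omega) m le_rfl (by rw [hpv0, hpvm, h]); omega
  have hiD : i ≠ D 2 := fun h => by
    have := hpvinj 0 (by omega) 1 (by omega) (by rw [hpv0, hpvD 1 le_rfl (by omega), h]); omega
  have hDD : ∀ k, 2 ≤ k → k ≤ m - 1 → D k ≠ D (k+1) := fun k h2 hk h => by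
    have e := hpvD (k-1) (by omega) (by omega)
    rw [show k - 1 + 1 = k by omega] at e
    have := hpvinj (k-1) (by omega) k (by omega) (by rw [e, hpvD k (by omega) hk, h])
    omega
  have hDj : D m ≠ j := fun h => by
    have e := hpvD (m-1) (by omega) (by omega)
    rw [show m - 1 + 1 = m by omega] at e
    have := hpvinj (m-1) (by omega) m le_rfl (by rw [e, hpvm, h])
    omega
  have hex : ∀ a b : V, a ≠ b → ∀ u w : ℝ, 0 ≤ u → 0 ≤ w →
      ∃ y : V → ℝ, (∀ q, 0 ≤ y q) ∧ y a = u ∧ y b = w := fun a b hab u w hu hw => by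
    refine ⟨fun q => if q = a then u else w, fun q => ?_, by simp, by simp [hab.symm]⟩
    dsimp only
    split_ifs
    exacts [hu, hw]
  have hbiv_le : ∀ k, 1 ≤ k → k ≤ N → ∀ a ∈ C k, ∀ b, ∀ y : V → ℝ, (∀ q, 0 ≤ y q) →
      bivC k a b (y a) (y b) ≤ gC k y := fun k h1 hk a ha b y hy => by
    rw [hbivC]
    refine csInf_le ⟨0, ?_⟩ ⟨y, hy, rfl, rfl, rfl⟩
    rintro r ⟨x, hx, -, -, rfl⟩
    exact (hx a).trans (hmax k h1 hk x hx a ha)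
  have hle_biv : ∀ k, 1 ≤ k → k ≤ N → ∀ a ∈ C k, ∀ b, a ≠ b → ∀ u w : ℝ, 0 ≤ u → 0 ≤ w →
      u ≤ bivC k a b u w := fun k h1 hk a ha b hab u w hu hw => by
    obtain ⟨y, hy, hya, hyb⟩ := hex a b hab u w hu hw
    rw [hbivC]
    refine le_csInf ⟨_, y, hy, hya, hyb, rfl⟩ ?_
    rintro r ⟨x, hx, hxa, -, rfl⟩
    exact hxa ▸ hmax k h1 hk x hx a ha
  have hbiv_near : ∀ k, ∀ a b, a ≠ b → ∀ u w : ℝ, 0 ≤ u → 0 ≤ w → ∀ ε : ℝ, 0 < ε →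
      ∃ z : V → ℝ, (∀ q, 0 ≤ z q) ∧ z a = u ∧ z b = w ∧ gC k z ≤ bivC k a b u w + ε :=
    fun k a b hab u w hu hw ε hε => by
      obtain ⟨y, hy, hya, hyb⟩ := hex a b hab u w hu hw
      obtain ⟨r, ⟨z, hz, hza, hzb, rfl⟩, hr⟩ := exists_lt_of_csInf_lt
        (by exact ⟨_, y, hy, hya, hyb, rfl⟩) ((hbivC k a b u w).symm.trans_lt (lt_add_of_pos_right _ hε))
      exact ⟨z, hz, hza, hzb, hr.le⟩
  have hterm : ∀ y : V → ℝ, (∀ q, 0 ≤ y q) → ∀ k ∈ Finset.Icc 2 N, 0 ≤ gC k y - y (D k) :=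
    fun y hy k hk => by
      obtain ⟨h2, hk⟩ := Finset.mem_Icc.1 hk
      exact sub_nonneg.2 (hmax k (by omega) hk y hy _ (hDC k h2 hk))
  apply le_antisymm
  · refine le_csInf ⟨_, 0, fun _ => le_rfl, rfl⟩ ?_
    rintro r ⟨s, hs, rfl⟩
    have hbdd : BddBelow {r | ∃ y : V → ℝ, (∀ q, 0 ≤ y q) ∧ y i = xi ∧ y j = xj ∧ r = g y} := by
      refine ⟨0, ?_⟩
      rintro r ⟨y, hy, -, -, rfl⟩
      rw [hg]
      exact add_nonneg ((hy i).trans (hmax 1 le_rfl hN y hy i hi)) (Finset.sum_nonneg (hterm y hy))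
    -- near-optimal configurations on the cliques of the path before the last one
    have hchain : ∀ n, 1 ≤ n → n ≤ m - 1 → ∀ ε : ℝ, 0 < ε → ∃ y : V → ℝ, (∀ q, 0 ≤ y q) ∧
        y i = xi ∧ y (D (n+1)) = s (n+1) ∧
        gC 1 y + ∑ k ∈ Finset.Icc 2 n, (gC k y - y (D k)) ≤
          bivC 1 i (D 2) xi (s 2)
            + ∑ k ∈ Finset.Icc 2 n, (bivC k (D k) (D (k+1)) (s k) (s (k+1)) - s k) + ε := by
      intro n hn
      induction n, hn using Nat.le_induction with
      | base =>
        intro _ ε hε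
        obtain ⟨y, hy, hyi, hyD, hle⟩ := hbiv_near 1 i (D 2) hiD xi (s 2) hxi (hs 2) ε hε
        exact ⟨y, hy, hyi, hyD, by simpa using hle⟩
      | succ n hn ih =>
        intro hnm ε hε
        obtain ⟨y, hy, hyi, hyD, hle⟩ := ih (by omega) (ε/2) (by linarith)
        obtain ⟨z, hz, hza, hzb, hzle⟩ := hbiv_near (n+1) (D (n+1)) (D (n+1+1))
          (hDD (n+1) (by omega) hnm) (s (n+1)) (s (n+1+1)) (hs _) (hs _) (ε/2) (by linarith)
        obtain ⟨x, hx, hxy, hxz, hsum⟩ := glue N C D hRIP gC hloc n hn (by omega) y z hy hz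
          (by rw [hza, hyD])
        refine ⟨x, hx, by rw [hxy 1 le_rfl hn i hi, hyi], ?_, ?_⟩
        · rw [hxz _ (hDchain (n+1+1) (by omega) (by omega)).1, hzb]
        · rw [hsum, Finset.sum_Icc_succ_top (by omega), hza]
          linarith
    have hall : ∀ n, m ≤ n → n ≤ N → ∀ ε : ℝ, 0 < ε → ∃ y : V → ℝ, (∀ q, 0 ≤ y q) ∧
        y i = xi ∧ y j = xj ∧
        gC 1 y + ∑ k ∈ Finset.Icc 2 n, (gC k y - y (D k)) ≤
          bivC 1 i (D 2) xi (s 2)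
            + (∑ k ∈ Finset.Icc 2 (m-1), (bivC k (D k) (D (k+1)) (s k) (s (k+1)) - s k))
            + bivC m (D m) j (s m) xj - s m + ε := by
      intro n hn
      induction n, hn using Nat.le_induction with
      | base =>
        intro _ ε hε
        obtain ⟨p, rfl⟩ : ∃ p, m = p + 1 := ⟨m - 1, by omega⟩
        obtain ⟨y, hy, hyi, hyD, hle⟩ := hchain p (by omega) (by omega) (ε/2) (by linarith)
        obtain ⟨z, hz, hza, hzb, hzle⟩ := hbiv_near (p+1) (D (p+1)) j hDj
          (s (p+1)) xj (hs _) hxj (ε/2) (by linarith)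
        obtain ⟨x, hx, hxy, hxz, hsum⟩ := glue N C D hRIP gC hloc p (by omega) hmN y z hy hz
          (by rw [hza, hyD])
        refine ⟨x, hx, by rw [hxy 1 le_rfl (by omega) i hi, hyi], by rw [hxz j hj, hzb], ?_⟩
        rw [hsum, hza, Nat.add_sub_cancel]
        linarith
      | succ n hn ih =>
        intro hnN ε hε
        obtain ⟨y, hy, hyi, hyj, hle⟩ := ih (by omega) (ε/2) (by linarith)
        -- off the path, the identity univariate marginal makes the extra summand at most `ε/2`
        have hu := hunit (n+1) (by omega) hnN _ (hDC (n+1) (by omega) hnN) _ (hy (D (n+1)))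
        obtain ⟨r, ⟨z, hz, hza, rfl⟩, hr⟩ := exists_lt_of_csInf_lt
          (by exact ⟨_, y, hy, rfl, rfl⟩) (hu.trans_lt (lt_add_of_pos_right _ (half_pos hε)))
        obtain ⟨x, hx, hxy, -, hsum⟩ := glue N C D hRIP gC hloc n (by omega) hnN y z hy hz hza
        refine ⟨x, hx, by rw [hxy 1 le_rfl (by omega) i hi, hyi],
          by rw [hxy m (by omega) hn j hj, hyj], ?_⟩
        rw [hsum, hza]
        linarith
    refine le_of_forall_pos_le_add fun ε hε => ?_
    obtain ⟨y, hy, hyi, hyj, hle⟩ := hall N hmN le_rfl ε hε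
    rw [← hg] at hle
    exact (csInf_le hbdd ⟨y, hy, hyi, hyj, rfl⟩).trans hle
  · obtain ⟨y₀, hy₀, hy₀i, hy₀j⟩ := hex i j hij xi xj hxi hxj
    refine le_csInf ⟨_, y₀, hy₀, hy₀i, hy₀j, rfl⟩ ?_
    rintro r ⟨y, hy, hyi, hyj, rfl⟩
    have hbdd : BddBelow {r | ∃ s : ℕ → ℝ, (∀ q, 0 ≤ s q) ∧
          r = bivC 1 i (D 2) xi (s 2)
            + (∑ k ∈ Finset.Icc 2 (m-1), (bivC k (D k) (D (k+1)) (s k) (s (k+1)) - s k))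
            + bivC m (D m) j (s m) xj - s m} := by
      refine ⟨0, ?_⟩
      rintro r ⟨s, hs, rfl⟩
      have h1 := hle_biv 1 le_rfl hN i hi (D 2) hiD xi (s 2) hxi (hs 2)
      have h2 : 0 ≤ ∑ k ∈ Finset.Icc 2 (m-1),
          (bivC k (D k) (D (k+1)) (s k) (s (k+1)) - s k) := Finset.sum_nonneg fun k hk => by
        obtain ⟨hk2, hkm⟩ := Finset.mem_Icc.1 hk
        exact sub_nonneg.2 (hle_biv k (by omega) (by omega) _ (hDC k hk2 (by omega)) _
          (hDD k hk2 hkm) _ _ (hs _) (hs _))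
      have h3 := hle_biv m (by omega) hmN _ (hDC m hm hmN) j hDj (s m) xj (hs m) hxj
      linarith
    refine (csInf_le hbdd ⟨fun k => y (D k), fun k => hy _, rfl⟩).trans ?_
    have h1 := hbiv_le 1 le_rfl hN i hi (D 2) y hy
    have h2 : ∑ k ∈ Finset.Icc 2 (m-1), (bivC k (D k) (D (k+1)) (y (D k)) (y (D (k+1))) - y (D k))
        ≤ ∑ k ∈ Finset.Icc 2 (m-1), (gC k y - y (D k)) := Finset.sum_le_sum fun k hk => by
      obtain ⟨hk2, hkm⟩ := Finset.mem_Icc.1 hk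
      exact sub_le_sub_right
        (hbiv_le k (by omega) (by omega) _ (hDC k hk2 (by omega)) (D (k+1)) y hy) _
    have h3 := hbiv_le m (by omega) hmN _ (hDC m hm hmN) j y hy
    have h4 : ∑ k ∈ Finset.Icc 2 m, (gC k y - y (D k)) ≤
        ∑ k ∈ Finset.Icc 2 N, (gC k y - y (D k)) :=
      Finset.sum_le_sum_of_subset_of_nonneg (Finset.Icc_subset_Icc_right hmN)
        fun k hk _ => hterm y hy k hk
    have h5 : ∑ k ∈ Finset.Icc 2 m, (gC k y - y (D k)) =
        ∑ k ∈ Finset.Icc 2 (m-1), (gC k y - y (D k)) + (gC m y - y (D m)) := by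
      obtain ⟨p, rfl⟩ : ∃ p, m = p + 1 := ⟨m - 1, by omega⟩
      rw [Finset.sum_Icc_succ_top (by omega), Nat.add_sub_cancel]
    rw [hyi] at h1
    rw [hyj] at h3
    rw [hg]
    linarith
end

section
/- Let m ≥ 3 and consider the chain gauge g(x) = Σ_{l=1}^{m−1} g_l(x_l, x_{l+1}) − Σ_{l=2}^{m−1} x_l on [0,∞)^m, where each g_l is a bivariate gauge function with identity univariate marginals: inf_{v≥0} g_l(u, v) = u and inf_{u≥0} g_l(u, v) = v for all u, v ≥ 0. Then for every index k ∈ {1, …, m}, the marginalization inf_{x_k ≥ 0} g(x) is again a chain gauge on the remaining coordinates: for k = 1 it equals Σ_{l=2}^{m−1} g_l(x_l, x_{l+1}) − Σ_{l=3}^{m−1} x_l; for k = m it equals Σ_{l=1}^{m−2} g_l(x_l, x_{l+1}) − Σ_{l=2}^{m−2} x_l; and for 1 < k < m it equals the chain gauge on coordinates (x_1, …, x_{k−1}, x_{k+1}, …, x_m) with the two edges at k replaced by the single edge gauge g'(u, w) = inf_{t ≥ 0} [ g_{k−1}(u, t) + g_k(t, w) − t ]. -/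
/-!
A vertex of the chain enters the gauge only through its incident edges and its own linear term.
Splitting these off leaves an additive constant, which passes through the infimum
(`sInf_shift`; the domination of the max supplies the lower bound this needs).
At an end vertex the remaining infimum is that of one edge gauge, and the identity marginal
evaluates it to the neighbouring coordinate, which cancels that neighbour's linear term.
At an interior vertex the remaining infimum is the merged edge gauge by definition.
-/

/-- An additive constant passes through an infimum over `[0, ∞)`. The lower bound is needed because
`sInf` of a set unbounded below is `0`. -/
lemma sInf_shift (F f : ℝ → ℝ) (B c : ℝ) (hB : ∀ t, 0 ≤ t → B ≤ f t)
    (hF : ∀ t, 0 ≤ t → F t = f t + c) :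
    sInf {r | ∃ t : ℝ, 0 ≤ t ∧ r = F t} = sInf {r | ∃ t : ℝ, 0 ≤ t ∧ r = f t} + c := by
  have hbdd : BddBelow {r | ∃ t : ℝ, 0 ≤ t ∧ r = f t} := by
    refine ⟨B, ?_⟩
    rintro _ ⟨t, ht, rfl⟩
    exact hB t ht
  apply le_antisymm
  · rw [← sub_le_iff_le_add]
    refine le_csInf ⟨_, 0, le_rfl, rfl⟩ ?_
    rintro _ ⟨t, ht, rfl⟩
    rw [sub_le_iff_le_add, ← hF t ht]
    refine csInf_le ⟨B + c, ?_⟩ ⟨t, ht, rfl⟩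
    rintro _ ⟨s, hs, rfl⟩
    rw [hF s hs]
    linarith [hB s hs]
  · refine le_csInf ⟨_, 0, le_rfl, rfl⟩ ?_
    rintro _ ⟨t, ht, rfl⟩
    rw [hF t ht]
    linarith [csInf_le hbdd ⟨t, ht, rfl⟩]

/-- The edge sum of the chain with the two edges at an interior vertex `k` split off. -/
lemma sum_split_interior (F : ℕ → ℝ) (m k : ℕ) (h1 : 1 < k) (h2 : k < m) :
    ∑ l ∈ Finset.Icc 1 (m-1), F l = (∑ l ∈ Finset.Icc 1 (k-2), F l) + F (k-1) + F k
      + ∑ l ∈ Finset.Icc (k+1) (m-1), F l := by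
  have e : Finset.Icc 1 (m-1) =
      insert (k-1) (insert k (Finset.Icc 1 (k-2) ∪ Finset.Icc (k+1) (m-1))) := by
    ext a
    simp only [Finset.mem_Icc, Finset.mem_insert, Finset.mem_union]
    omega
  rw [e, Finset.sum_insert, Finset.sum_insert, Finset.sum_union]
  · ring
  · rw [Finset.disjoint_left]
    intro a
    simp only [Finset.mem_Icc]
    omega
  · simp only [Finset.mem_Icc, Finset.mem_union]
    omega
  · simp only [Finset.mem_Icc, Finset.mem_insert, Finset.mem_union]
    omega

lemma sum_Icc_first (F : ℕ → ℝ) (a b : ℕ) (h : a ≤ b) :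
    ∑ l ∈ Finset.Icc a b, F l = F a + ∑ l ∈ Finset.Icc (a+1) b, F l := by
  have e : Finset.Icc a b = insert a (Finset.Icc (a+1) b) := by
    ext c
    simp only [Finset.mem_Icc, Finset.mem_insert]
    omega
  rw [e, Finset.sum_insert (by simp)]

lemma sum_Icc_last (F : ℕ → ℝ) (a m : ℕ) (h : a + 1 ≤ m) (hm : 2 ≤ m) :
    ∑ l ∈ Finset.Icc a (m-1), F l = (∑ l ∈ Finset.Icc a (m-2), F l) + F (m-1) := by
  have e : Finset.Icc a (m-1) = insert (m-1) (Finset.Icc a (m-2)) := by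
    ext c
    simp only [Finset.mem_Icc, Finset.mem_insert]
    omega
  rw [e, Finset.sum_insert (by simp only [Finset.mem_Icc]; omega), add_comm]

lemma sum_update_edges (gl : ℕ → ℝ → ℝ → ℝ) (x : ℕ → ℝ) (k : ℕ) (t : ℝ) (s : Finset ℕ)
    (h : ∀ l ∈ s, l ≠ k ∧ l + 1 ≠ k) :
    ∑ l ∈ s, gl l (Function.update x k t l) (Function.update x k t (l+1))
      = ∑ l ∈ s, gl l (x l) (x (l+1)) := by
  refine Finset.sum_congr rfl fun l hl => ?_
  rw [Function.update_of_ne (h l hl).1, Function.update_of_ne (h l hl).2]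

lemma sum_update_verts (x : ℕ → ℝ) (k : ℕ) (t : ℝ) (s : Finset ℕ) (h : k ∉ s) :
    ∑ l ∈ s, Function.update x k t l = ∑ l ∈ s, x l := by
  refine Finset.sum_congr rfl fun l hl => ?_
  rw [Function.update_of_ne]
  rintro rfl
  exact h hl


/-- **Lemma 3**: marginalizing a chain geometric extremal graphical model (exponential
margins) over any vertex yields again a chain geometric extremal graphical model.  The
chain has vertices `1, …, m` and gauge
`g(x) = Σ_{l=1}^{m−1} g_l(x_l, x_{l+1}) − Σ_{l=2}^{m−1} x_l`, where each edge gauge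
dominates the max and has identity univariate marginals.  Marginalizing over the first
or last vertex drops the corresponding edge; marginalizing over an interior vertex `k`
merges the two edges at `k` into `g'(u,w) = inf_{t≥0} (g_{k−1}(u,t) + g_k(t,w) − t)`. -/
theorem stmt_13
    (m : ℕ) (hm : 3 ≤ m)
    (gl : ℕ → ℝ → ℝ → ℝ)
    (hmax : ∀ l, 1 ≤ l → l ≤ m - 1 → ∀ u v : ℝ, 0 ≤ u → 0 ≤ v → max u v ≤ gl l u v)
    (hid1 : ∀ l, 1 ≤ l → l ≤ m - 1 → ∀ u : ℝ, 0 ≤ u →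
      sInf {r | ∃ t : ℝ, 0 ≤ t ∧ r = gl l u t} = u)
    (hid2 : ∀ l, 1 ≤ l → l ≤ m - 1 → ∀ w : ℝ, 0 ≤ w →
      sInf {r | ∃ t : ℝ, 0 ≤ t ∧ r = gl l t w} = w)
    (g : (ℕ → ℝ) → ℝ)
    (hg : ∀ x, g x = (∑ l ∈ Finset.Icc 1 (m-1), gl l (x l) (x (l+1)))
      - ∑ l ∈ Finset.Icc 2 (m-1), x l)
    (x : ℕ → ℝ) (hx : ∀ q, 0 ≤ x q) :
    (sInf {r | ∃ t : ℝ, 0 ≤ t ∧ r = g (Function.update x 1 t)}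
        = (∑ l ∈ Finset.Icc 2 (m-1), gl l (x l) (x (l+1)))
          - ∑ l ∈ Finset.Icc 3 (m-1), x l)
    ∧ (sInf {r | ∃ t : ℝ, 0 ≤ t ∧ r = g (Function.update x m t)}
        = (∑ l ∈ Finset.Icc 1 (m-2), gl l (x l) (x (l+1)))
          - ∑ l ∈ Finset.Icc 2 (m-2), x l)
    ∧ (∀ k, 1 < k → k < m →
        sInf {r | ∃ t : ℝ, 0 ≤ t ∧ r = g (Function.update x k t)}
          = (∑ l ∈ Finset.Icc 1 (k-2), gl l (x l) (x (l+1)))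
            + sInf {r | ∃ t : ℝ, 0 ≤ t ∧ r = gl (k-1) (x (k-1)) t + gl k t (x (k+1)) - t}
            + (∑ l ∈ Finset.Icc (k+1) (m-1), gl l (x l) (x (l+1)))
            - ∑ l ∈ (Finset.Icc 2 (m-1)).erase k, x l) := by
  refine ⟨?_, ?_, ?_⟩
  · rw [sInf_shift _ (fun t => gl 1 t (x 2)) 0
      ((∑ l ∈ Finset.Icc 2 (m-1), gl l (x l) (x (l+1))) - ∑ l ∈ Finset.Icc 2 (m-1), x l)]
    · rw [hid2 1 le_rfl (by omega) _ (hx 2), sum_Icc_first x 2 (m-1) (by omega)]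
      ring
    · intro t ht
      exact ht.trans ((le_max_left _ _).trans (hmax 1 le_rfl (by omega) _ _ ht (hx 2)))
    · intro t _
      rw [hg, sum_Icc_first _ 1 (m-1) (by omega),
        sum_update_edges gl x 1 t _ (fun l hl => by
          simp only [Finset.mem_Icc] at hl
          omega),
        sum_update_verts x 1 t _ (by simp)]
      simp only [Function.update_self, Function.update_of_ne (show (1 + 1 : ℕ) ≠ 1 by norm_num)]
      ring
  · have e : m - 1 + 1 = m := by omega
    rw [sInf_shift _ (fun t => gl (m-1) (x (m-1)) t) 0
      ((∑ l ∈ Finset.Icc 1 (m-2), gl l (x l) (x (l+1))) - ∑ l ∈ Finset.Icc 2 (m-1), x l)]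
    · rw [hid1 (m-1) (by omega) le_rfl _ (hx _), sum_Icc_last x 2 m hm (by omega)]
      ring
    · intro t ht
      exact ht.trans ((le_max_right _ _).trans (hmax (m-1) (by omega) le_rfl _ _ (hx _) ht))
    · intro t _
      rw [hg, sum_Icc_last _ 1 m (by omega) (by omega),
        sum_update_edges gl x m t _ (fun l hl => by
          simp only [Finset.mem_Icc] at hl
          omega),
        sum_update_verts x m t _ (by simp only [Finset.mem_Icc]; omega), e,
        Function.update_self, Function.update_of_ne (show m - 1 ≠ m by omega)]
      ring
  · intro k h1 h2
    have e : k - 1 + 1 = k := by omega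
    have hk : k ∈ Finset.Icc 2 (m-1) := by
      simp only [Finset.mem_Icc]
      omega
    rw [sInf_shift _ (fun t => gl (k-1) (x (k-1)) t + gl k t (x (k+1)) - t) 0
      ((∑ l ∈ Finset.Icc 1 (k-2), gl l (x l) (x (l+1)))
        + (∑ l ∈ Finset.Icc (k+1) (m-1), gl l (x l) (x (l+1)))
        - ∑ l ∈ (Finset.Icc 2 (m-1)).erase k, x l)]
    · ring
    · intro t ht
      -- Each incident edge gauge is at least `t ≥ 0`, so subtracting a single `t` is harmless.
      have a := (le_max_right _ _).trans
        (hmax (k-1) (by omega) (by omega) (x (k-1)) t (hx _) ht)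
      have b := (le_max_left _ _).trans (hmax k (by omega) (by omega) t (x (k+1)) ht (hx _))
      show 0 ≤ gl (k-1) (x (k-1)) t + gl k t (x (k+1)) - t
      linarith
    · intro t _
      rw [hg, sum_split_interior _ m k h1 h2,
        sum_update_edges gl x k t (Finset.Icc 1 (k-2)) (fun l hl => by
          simp only [Finset.mem_Icc] at hl
          omega),
        sum_update_edges gl x k t (Finset.Icc (k+1) (m-1)) (fun l hl => by
          simp only [Finset.mem_Icc] at hl
          omega),
        ← Finset.add_sum_erase _ _ hk,
        sum_update_verts x k t _ (Finset.notMem_erase _ _), e,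
        Function.update_self, Function.update_of_ne (show k - 1 ≠ k by omega),
        Function.update_of_ne (show k + 1 ≠ k by omega)]
      ring
end

section
/- In the two-edge chain setting, suppose α_{π|i} > 0, α_{j|π} > 0, and σ_a > σ_b ≥ 1 (strictly). Then the minimized function f(x) = g_{ij}(1, α_{π|i}·α_{j|π} + x) − 1 satisfies f(x)/A⁺(x/α_{j|π}) → 1 as x → 0+; in particular f is regularly varying at 0+ with index σ_a, so β_{j|i} = β_{π|i}. -/
/-!
Write `a = α_{π|i}`, `b = α_{j|π}`, `t = x / b`, `w = a b + x`, and let `A`, `B` be the two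
increments `y ↦ g(1, α + y) - 1`. By homogeneity the quantity minimised over `s` is, up to the
constant `1` and for `s > 0`, equal to `A (s - a) + s * B (w / s - b)`.

* Choosing `s = a + t` makes the second term vanish, so `f x ≤ A t`.
* Conversely, fix `κ < 1`. If `s - a ≥ l t` with `l < 1` close to `1`, then already
  `A (s - a) ≥ κ A t`. If `s - a < l t`, the argument of `B` is at least a constant times `t`; since
  `B` has the strictly smaller index, the second term dominates `A t`. Values of `s` near `0`
  contribute at least a positive constant, because `g ≥ max`.

Neither increment is assumed monotone, so both comparisons need uniformity in regular variation:
Potter's bounds (`potter_log`). These come from the additive uniform convergence theorem: if `H` is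
continuous and `H (t + u) - H t → 0` for every `u`, a Baire category argument makes the convergence
uniform for `u` near `0`, hence on `[0, 1]`, and chaining unit steps gives
`|H (t + v) - H t| ≤ ε (1 + v)` for all `v ≥ 0` and all large `t`. It is applied to
`H t = log F (exp (-t)) + σ t`.
-/

open Filter Topology

/-- Regular variation at `0⁺` with index `σ`. -/
def RV0 (F : ℝ → ℝ) (σ : ℝ) : Prop :=
  ∀ l : ℝ, 0 < l →
    Filter.Tendsto (fun x => F (l * x) / F x) (nhdsWithin 0 (Set.Ioi 0)) (nhds (l ^ σ))

/-- Local uniform convergence theorem: Baire category applied to the closed sets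
`{u | ∀ t ≥ n, |H (t + u) - H t| ≤ ε / 2}`, which cover `ℝ`. -/
lemma uct_local (H : ℝ → ℝ) (hH : Continuous H)
    (hlim : ∀ u, Tendsto (fun t => H (t + u) - H t) atTop (𝓝 0)) (ε : ℝ) (hε : 0 < ε) :
    ∃ r > 0, ∃ T : ℝ, ∀ t ≥ T, ∀ v, 0 ≤ v → v ≤ r → |H (t + v) - H t| ≤ ε := by
  let E : ℕ → Set ℝ := fun n => {u | ∀ t, (n : ℝ) ≤ t → |H (t + u) - H t| ≤ ε / 2}
  have hc : ∀ n, IsClosed (E n) := by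
    intro n
    simp only [E, Set.ofPred_forall]
    refine isClosed_iInter fun t => isClosed_iInter fun _ => ?_
    exact isClosed_le (by fun_prop) continuous_const
  have hU : ⋃ n, E n = Set.univ := by
    refine Set.eq_univ_of_forall fun u => ?_
    have h1 := (Metric.tendsto_nhds.1 (hlim u)) (ε / 2) (by positivity)
    obtain ⟨T, hT⟩ := eventually_atTop.1 h1
    obtain ⟨n, hn⟩ := exists_nat_ge T
    refine Set.mem_iUnion.2 ⟨n, fun t ht => ?_⟩
    have := hT t (hn.trans ht)
    rw [Real.dist_eq, sub_zero] at this
    exact this.le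
  obtain ⟨n, u, hu⟩ := nonempty_interior_of_iUnion_of_closed hc hU
  rw [mem_interior_iff_mem_nhds, Metric.mem_nhds_iff] at hu
  obtain ⟨r, hr, hball⟩ := hu
  refine ⟨r / 2, by positivity, n + u, fun t ht v hv0 hv => ?_⟩
  have m1 : u + v ∈ E n := hball (by
    rw [Metric.mem_ball, Real.dist_eq, add_sub_cancel_left, abs_of_nonneg hv0]; linarith)
  have m0 : u ∈ E n := hball (Metric.mem_ball_self hr)
  -- compare `H (t + v)` and `H t` through the common base point `t - u`
  have h1 := m1 (t - u) (by linarith)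
  have h0 := m0 (t - u) (by linarith)
  rw [show t - u + (u + v) = t + v by ring] at h1
  rw [sub_add_cancel] at h0
  rw [abs_le] at *
  constructor <;> linarith [h1.1, h1.2, h0.1, h0.2]

lemma uct_unit (H : ℝ → ℝ) (hH : Continuous H)
    (hlim : ∀ u, Tendsto (fun t => H (t + u) - H t) atTop (𝓝 0)) (ε : ℝ) (hε : 0 < ε) :
    ∃ T : ℝ, ∀ t ≥ T, ∀ v, 0 ≤ v → v ≤ 1 → |H (t + v) - H t| ≤ ε := by
  obtain ⟨r, hr, T₀, hT₀⟩ := uct_local H hH hlim (ε / 2) (by positivity)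
  have key : ∀ k : ℕ, ∃ T : ℝ, ∀ t ≥ T, ∀ v, 0 ≤ v → v ≤ k * r → |H (t + v) - H t| ≤ ε := by
    intro k
    induction k with
    | zero =>
      refine ⟨0, fun t _ v h0 h1 => ?_⟩
      have : v = 0 := le_antisymm (by simpa using h1) h0
      simp [this, hε.le]
    | succ k ih =>
      obtain ⟨T₁, hT₁⟩ := ih
      have h1 := (Metric.tendsto_nhds.1 (hlim (k * r))) (ε / 2) (by positivity)
      obtain ⟨T₂, hT₂⟩ := eventually_atTop.1 h1
      refine ⟨max T₀ (max T₁ T₂), fun t ht v h0 hv => ?_⟩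
      have ht0 : T₀ ≤ t := (le_max_left _ _).trans ht
      have ht1 : T₁ ≤ t := ((le_max_left _ _).trans (le_max_right _ _)).trans ht
      have ht2 : T₂ ≤ t := ((le_max_right _ _).trans (le_max_right _ _)).trans ht
      rcases le_total v (k * r) with h | h
      · exact hT₁ t ht1 v h0 h
      · have hkr : 0 ≤ (k : ℝ) * r := by positivity
        push_cast at hv
        have e1 := hT₀ (t + k * r) (by linarith) (v - k * r) (by linarith) (by linarith)
        have e2 := hT₂ t ht2
        rw [Real.dist_eq, sub_zero] at e2
        rw [show t + k * r + (v - k * r) = t + v by ring] at e1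
        rw [abs_le] at *
        rw [abs_lt] at e2
        constructor <;> linarith [e1.1, e1.2, e2.1, e2.2]
  obtain ⟨k, hk⟩ := exists_nat_ge (1 / r)
  obtain ⟨T, hT⟩ := key k
  rw [div_le_iff₀ hr] at hk
  exact ⟨T, fun t ht v h0 h1 => hT t ht v h0 (h1.trans hk)⟩

lemma potter_additive (H : ℝ → ℝ) (hH : Continuous H)
    (hlim : ∀ u, Tendsto (fun t => H (t + u) - H t) atTop (𝓝 0)) (ε : ℝ) (hε : 0 < ε) :
    ∃ T : ℝ, ∀ t ≥ T, ∀ v, 0 ≤ v → |H (t + v) - H t| ≤ ε * (1 + v) := by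
  obtain ⟨T, hT⟩ := uct_unit H hH hlim ε hε
  refine ⟨T, fun t ht v hv => ?_⟩
  have key : ∀ n : ℕ, ∀ v : ℝ, 0 ≤ v → v ≤ n → |H (t + v) - H t| ≤ ε * n := by
    intro n
    induction n with
    | zero =>
      intro v h0 h1
      have : v = 0 := le_antisymm (by simpa using h1) h0
      simp [this]
    | succ n ih =>
      intro v h0 hv
      push_cast at hv ⊢
      have hn : 0 ≤ ε * n := by positivity
      rcases le_total v 1 with h | h
      · have := hT t ht v h0 h
        linarith
      · have e1 := ih (v - 1) (by linarith) (by linarith)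
        have e2 := hT (t + (v - 1)) (by linarith) 1 zero_le_one le_rfl
        rw [show t + (v - 1) + 1 = t + v by ring] at e2
        rw [abs_le] at *
        constructor <;> linarith [e1.1, e1.2, e2.1, e2.2]
  refine (key ⌈v⌉₊ v hv (Nat.le_ceil v)).trans ?_
  have := Nat.ceil_lt_add_one hv
  exact mul_le_mul_of_nonneg_left (by linarith) hε.le

/-- Potter's bounds in logarithmic form. -/
lemma potter_log (F : ℝ → ℝ) (σ : ℝ) (hc : ContinuousOn F (Set.Ioi 0))
    (hpos : ∀ y, 0 < y → 0 < F y) (hF : RV0 F σ) (ε : ℝ) (hε : 0 < ε) :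
    ∃ δ > 0, ∀ x y, 0 < x → x ≤ y → y ≤ δ →
      |Real.log (F x) - Real.log (F y) - σ * (Real.log x - Real.log y)|
        ≤ ε * (1 + (Real.log y - Real.log x)) := by
  let H : ℝ → ℝ := fun t => Real.log (F (Real.exp (-t))) + σ * t
  have hH : Continuous H := by
    have h1 : Continuous fun t : ℝ => F (Real.exp (-t)) :=
      hc.comp_continuous (by fun_prop) fun t => Real.exp_pos _
    exact (h1.log fun t => (hpos _ (Real.exp_pos _)).ne').add (by fun_prop)
  have hlim : ∀ u, Tendsto (fun t => H (t + u) - H t) atTop (𝓝 0) := by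
    intro u
    have h0 : Tendsto (fun t : ℝ => Real.exp (-t)) atTop (𝓝[>] 0) :=
      tendsto_nhdsWithin_iff.2
        ⟨Real.tendsto_exp_neg_atTop_nhds_zero, Eventually.of_forall fun t => Real.exp_pos _⟩
    have h1 := (hF (Real.exp (-u)) (Real.exp_pos _)).comp h0
    have h2 := h1.log (Real.rpow_pos_of_pos (Real.exp_pos _) _).ne'
    have h3 := h2.add_const (σ * u)
    rw [Real.log_rpow (Real.exp_pos _), Real.log_exp,
      show σ * -u + σ * u = 0 by ring] at h3
    refine h3.congr fun t => ?_
    simp only [Function.comp, H]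
    rw [← Real.exp_add, Real.log_div (hpos _ (Real.exp_pos _)).ne' (hpos _ (Real.exp_pos _)).ne',
      show -u + -t = -(t + u) by ring]
    ring
  obtain ⟨T, hT⟩ := potter_additive H hH hlim ε hε
  refine ⟨Real.exp (-T), Real.exp_pos _, fun x y hx hxy hy => ?_⟩
  have hy0 : 0 < y := hx.trans_le hxy
  have h1 : Real.log y ≤ -T := by
    rw [← Real.log_exp (-T)]; exact Real.log_le_log hy0 hy
  have h2 := Real.log_le_log hx hxy
  have h := hT (-Real.log y) (by linarith) (Real.log y - Real.log x) (by linarith)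
  simp only [H] at h
  rw [show -(-Real.log y + (Real.log y - Real.log x)) = Real.log x by ring, neg_neg,
    Real.exp_log hx, Real.exp_log hy0] at h
  refine le_of_eq_of_le ?_ h
  congr 1
  ring

lemma log_upper (F : ℝ → ℝ) (σ : ℝ) (hc : ContinuousOn F (Set.Ioi 0))
    (hpos : ∀ y, 0 < y → 0 < F y) (hF : RV0 F σ) (ε : ℝ) (hε : 0 < ε) :
    ∃ C : ℝ, ∃ δ > 0, ∀ x, 0 < x → x ≤ δ → Real.log (F x) ≤ C + (σ - ε) * Real.log x := by
  obtain ⟨δ, hδ, h⟩ := potter_log F σ hc hpos hF ε hε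
  refine ⟨Real.log (F δ) + ε - (σ - ε) * Real.log δ, δ, hδ, fun x hx hxd => ?_⟩
  have := (abs_le.1 (h x δ hx hxd le_rfl)).2
  linarith

lemma log_lower (F : ℝ → ℝ) (σ : ℝ) (hc : ContinuousOn F (Set.Ioi 0))
    (hpos : ∀ y, 0 < y → 0 < F y) (hF : RV0 F σ) (ε : ℝ) (hε : 0 < ε) :
    ∃ C : ℝ, ∃ δ > 0, ∀ x, 0 < x → x ≤ δ → C + (σ + ε) * Real.log x ≤ Real.log (F x) := by
  obtain ⟨δ, hδ, h⟩ := potter_log F σ hc hpos hF ε hε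
  refine ⟨Real.log (F δ) - ε - (σ + ε) * Real.log δ, δ, hδ, fun x hx hxd => ?_⟩
  have := (abs_le.1 (h x δ hx hxd le_rfl)).1
  linarith

lemma eventually_small (F : ℝ → ℝ) (σ : ℝ) (hσ : 0 < σ) (hc : ContinuousOn F (Set.Ioi 0))
    (hpos : ∀ y, 0 < y → 0 < F y) (hF : RV0 F σ) (m : ℝ) (hm : 0 < m) :
    ∃ δ > 0, ∀ x, 0 < x → x ≤ δ → F x ≤ m := by
  obtain ⟨C, δ, hδ, h⟩ := log_upper F σ hc hpos hF (σ / 2) (by positivity)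
  refine ⟨min δ (Real.exp ((Real.log m - C) / (σ / 2))),
    lt_min hδ (Real.exp_pos _), fun x hx hxd => ?_⟩
  have h1 := h x hx (hxd.trans (min_le_left _ _))
  have h2 := Real.log_le_log hx (hxd.trans (min_le_right _ _))
  rw [Real.log_exp, le_div_iff₀ (by positivity)] at h2
  rw [← Real.log_le_log_iff (hpos x hx) hm]
  linarith

/-- Near `0`, a regularly varying function of positive index is almost increasing: up to a factor
`κ < 1`, its value at `t` is a lower bound on all of `[l t, ∞)` for some `l < 1`. -/
lemma almost_monotone (F : ℝ → ℝ) (σ : ℝ) (hσ : 0 < σ) (hc : ContinuousOn F (Set.Ioi 0))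
    (hpos : ∀ y, 0 < y → 0 < F y) (hF : RV0 F σ)
    (hlow : ∀ δ > 0, ∃ m > 0, ∀ y, δ ≤ y → m ≤ F y)
    (κ : ℝ) (hκ0 : 0 < κ) (hκ1 : κ < 1) :
    ∃ l, 0 < l ∧ l < 1 ∧ ∃ δ > 0, ∀ t, 0 < t → t ≤ δ → ∀ y, l * t ≤ y → κ * F t ≤ F y := by
  have hlκ : Real.log κ < 0 := Real.log_neg hκ0 hκ1
  obtain ⟨ε, hε, hεσ, hεκ⟩ : ∃ ε > 0, ε ≤ σ ∧ 2 * ε ≤ -Real.log κ :=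
    ⟨min σ (-Real.log κ / 2), lt_min hσ (by linarith), min_le_left _ _,
      by linarith [min_le_right σ (-Real.log κ / 2)]⟩
  obtain ⟨δ, hδ, h⟩ := potter_log F σ hc hpos hF ε hε
  obtain ⟨m, hm, hmF⟩ := hlow δ hδ
  obtain ⟨δ', hδ', hs⟩ := eventually_small F σ hσ hc hpos hF m hm
  -- this `l` satisfies `l ^ (σ + ε) = exp (-ε)`
  refine ⟨Real.exp (-(ε / (σ + ε))), Real.exp_pos _, ?_, min δ δ', lt_min hδ hδ',
    fun t ht htd y hy => ?_⟩
  · rw [Real.exp_lt_one_iff]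
    have : 0 < ε / (σ + ε) := by positivity
    linarith
  have hy0 : 0 < y := lt_of_lt_of_le (by positivity) hy
  have htδ := htd.trans (min_le_left _ _)
  rcases le_total δ y with hyδ | hyδ
  · have h1 := hs t ht (htd.trans (min_le_right _ _))
    have h2 := hmF y hyδ
    have h3 := hpos t ht
    nlinarith
  rw [← Real.log_le_log_iff (mul_pos hκ0 (hpos t ht)) (hpos y hy0),
    Real.log_mul hκ0.ne' (hpos t ht).ne']
  rcases le_total t y with hty | hty
  · have h1 := (abs_le.1 (h t y ht hty hyδ)).2
    have h2 := Real.log_le_log ht hty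
    have h3 : 0 ≤ (σ - ε) * (Real.log y - Real.log t) :=
      mul_nonneg (by linarith) (by linarith)
    linarith
  · have h1 := (abs_le.1 (h y t hy0 hty htδ)).1
    have h2 := Real.log_le_log (by positivity) hy
    rw [Real.log_mul (Real.exp_pos _).ne' ht.ne', Real.log_exp] at h2
    have h3 : (Real.log t - Real.log y) ≤ ε / (σ + ε) := by linarith
    rw [le_div_iff₀ (by positivity)] at h3
    linarith

/-- A regularly varying function of strictly smaller index dominates, uniformly to the right of
`c t`. -/
lemma dominates (A B : ℝ → ℝ) (σa σb : ℝ) (hσb : 0 < σb) (hσ : σb < σa)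
    (hAc : ContinuousOn A (Set.Ioi 0)) (hBc : ContinuousOn B (Set.Ioi 0))
    (hApos : ∀ y, 0 < y → 0 < A y) (hBpos : ∀ y, 0 < y → 0 < B y)
    (hA : RV0 A σa) (hB : RV0 B σb)
    (hBlow : ∀ δ > 0, ∃ m > 0, ∀ y, δ ≤ y → m ≤ B y)
    (c K : ℝ) (hc : 0 < c) (hK : 0 < K) :
    ∃ δ > 0, ∀ t, 0 < t → t ≤ δ → ∀ z, c * t ≤ z → K * A t ≤ B z := by
  set ε := (σa - σb) / 4 with hε
  have hε0 : 0 < ε := by rw [hε]; linarith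
  obtain ⟨C₁, δ₁, hδ₁, h₁⟩ := log_upper A σa hAc hApos hA ε hε0
  obtain ⟨C₂, δ₂, hδ₂, h₂⟩ := log_lower B σb hBc hBpos hB ε hε0
  obtain ⟨m, hm, hmB⟩ := hBlow δ₂ hδ₂
  obtain ⟨δ₃, hδ₃, h₃⟩ := eventually_small A σa (hσb.trans hσ) hAc hApos hA (m / K)
    (by positivity)
  -- the last threshold absorbs all constants, since `(σa - ε) - (σb + ε) = 2 * ε > 0`
  refine ⟨min (min δ₁ δ₃)
      (Real.exp ((C₂ + (σb + ε) * Real.log c - Real.log K - C₁) / (2 * ε))),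
    lt_min (lt_min hδ₁ hδ₃) (Real.exp_pos _), fun t ht htd z hz => ?_⟩
  have hz0 : 0 < z := lt_of_lt_of_le (by positivity) hz
  have ht1 := (htd.trans (min_le_left _ _)).trans (min_le_left _ _)
  have ht3 := (htd.trans (min_le_left _ _)).trans (min_le_right _ _)
  have ht2 := Real.log_le_log ht (htd.trans (min_le_right _ _))
  rcases le_total δ₂ z with hzδ | hzδ
  · have := h₃ t ht ht3
    rw [le_div_iff₀ hK] at this
    linarith [hmB z hzδ]
  rw [← Real.log_le_log_iff (mul_pos hK (hApos t ht)) (hBpos z hz0),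
    Real.log_mul hK.ne' (hApos t ht).ne']
  have e1 := h₁ t ht ht1
  have e2 := h₂ z hz0 hzδ
  have e3 := Real.log_le_log (by positivity) hz
  rw [Real.log_mul hc.ne' ht.ne'] at e3
  rw [Real.log_exp, le_div_iff₀ (by positivity)] at ht2
  have e4 : (σb + ε) * (Real.log c + Real.log t) ≤ (σb + ε) * Real.log z :=
    mul_le_mul_of_nonneg_left e3 (by positivity)
  have e5 : σa = σb + 4 * ε := by rw [hε]; ring
  rw [e5] at e1
  linarith

/-- The increment `y ↦ g 1 (a + y) - 1` of a gauge beyond the last point `a` where `g 1 · = 1` is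
continuous and positive on `(0, ∞)`, and bounded away from `0` away from `0`. -/
lemma increment_props (g : ℝ → ℝ → ℝ)
    (hcont : ContinuousOn (fun p : ℝ × ℝ => g p.1 p.2) (Set.Ici 0 ×ˢ Set.Ici 0))
    (hmax : ∀ u v : ℝ, 0 ≤ u → 0 ≤ v → max u v ≤ g u v) (a : ℝ)
    (ha : IsGreatest {y | y ∈ Set.Icc (0:ℝ) 1 ∧ g 1 y = 1} a) (ha0 : 0 < a) :
    ContinuousOn (fun y => g 1 (a + y) - 1) (Set.Ioi 0) ∧
    (∀ y, 0 < y → 0 < g 1 (a + y) - 1) ∧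
    (∀ δ > 0, ∃ m > 0, ∀ y, δ ≤ y → m ≤ g 1 (a + y) - 1) := by
  have hc : ContinuousOn (fun y => g 1 (a + y) - 1) (Set.Ioi 0) := by
    refine ContinuousOn.sub ?_ continuousOn_const
    exact hcont.comp (f := fun y : ℝ => ((1 : ℝ), a + y)) (by fun_prop) fun y hy =>
      ⟨Set.mem_Ici.2 zero_le_one, Set.mem_Ici.2 (add_pos ha0 hy).le⟩
  have hp : ∀ y, 0 < y → 0 < g 1 (a + y) - 1 := by
    intro y hy
    have h1 := hmax 1 (a + y) zero_le_one (by linarith)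
    have h2 := (le_max_left _ _).trans h1
    have h3 := (le_max_right _ _).trans h1
    rcases h2.lt_or_eq with h | h
    · linarith
    · have := ha.2 (show a + y ∈ _ from ⟨⟨by linarith, by linarith⟩, h.symm⟩)
      linarith
  refine ⟨hc, hp, fun δ hδ => ?_⟩
  obtain ⟨y₀, hy₀, hmin⟩ := (isCompact_Icc (a := δ) (b := max δ 1)).exists_isMinOn
    (Set.nonempty_Icc.2 (le_max_left _ _)) (hc.mono fun y hy => hδ.trans_le hy.1)
  refine ⟨min (g 1 (a + y₀) - 1) a, lt_min (hp _ (hδ.trans_le hy₀.1)) ha0, fun y hy => ?_⟩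
  rcases le_total y (max δ 1) with h | h
  · exact (min_le_left _ _).trans (hmin ⟨hy, h⟩)
  · refine (min_le_right _ _).trans ?_
    have h1 : 1 ≤ y := (le_max_right _ _).trans h
    have := (le_max_right _ _).trans (hmax 1 (a + y) zero_le_one (by linarith))
    linarith

/-- **Case A(i) of Lemma 4** (two-edge chain, exponential margins): if
`α_{π|i} > 0`, `α_{j|π} > 0` and `σ_a > σ_b (≥ 1)`, then
`f(x) = g_{ij}(1, α_{π|i}·α_{j|π} + x) − 1` satisfies `f(x)/A⁺(x/α_{j|π}) → 1` as
`x → 0⁺`, and in particular `f ∈ RV⁰⁺_{σ_a}` (so `β_{j|i} = β_{π|i}`). -/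
theorem stmt_15
    (gip gpj : ℝ → ℝ → ℝ)
    (hip_cont : ContinuousOn (fun p : ℝ × ℝ => gip p.1 p.2) (Set.Ici 0 ×ˢ Set.Ici 0))
    (hpj_cont : ContinuousOn (fun p : ℝ × ℝ => gpj p.1 p.2) (Set.Ici 0 ×ˢ Set.Ici 0))
    (hip_hom : ∀ t u v : ℝ, 0 ≤ t → 0 ≤ u → 0 ≤ v → gip (t*u) (t*v) = t * gip u v)
    (hpj_hom : ∀ t u v : ℝ, 0 ≤ t → 0 ≤ u → 0 ≤ v → gpj (t*u) (t*v) = t * gpj u v)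
    (hip_max : ∀ u v : ℝ, 0 ≤ u → 0 ≤ v → max u v ≤ gip u v)
    (hpj_max : ∀ u v : ℝ, 0 ≤ u → 0 ≤ v → max u v ≤ gpj u v)
    (api ajp : ℝ)
    (hapi : IsGreatest {y | y ∈ Set.Icc (0:ℝ) 1 ∧ gip 1 y = 1} api)
    (hajp : IsGreatest {y | y ∈ Set.Icc (0:ℝ) 1 ∧ gpj 1 y = 1} ajp)
    (bpi bjp : ℝ)
    (hbpi : bpi ∈ Set.Ico (0:ℝ) 1) (hbjp : bjp ∈ Set.Ico (0:ℝ) 1)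
    (hA : RV0 (fun y => gip 1 (api + y) - 1) (1 / (1 - bpi)))
    (hB : RV0 (fun z => gpj 1 (ajp + z) - 1) (1 / (1 - bjp)))
    (gij : ℝ → ℝ → ℝ)
    (hgij : ∀ u w : ℝ, gij u w = sInf {r | ∃ s : ℝ, 0 ≤ s ∧ r = gip u s + gpj s w - s})
    (hapi_pos : 0 < api) (hajp_pos : 0 < ajp)
    (hσ : 1 / (1 - bjp) < 1 / (1 - bpi)) :
    Tendsto (fun x => (gij 1 (api * ajp + x) - 1) / (gip 1 (api + x / ajp) - 1))
        (nhdsWithin 0 (Set.Ioi 0)) (nhds 1)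
      ∧ RV0 (fun x => gij 1 (api * ajp + x) - 1) (1 / (1 - bpi)) := by
  obtain ⟨hAc, hApos, hAlow⟩ := increment_props gip hip_cont hip_max api hapi hapi_pos
  obtain ⟨hBc, hBpos, hBlow⟩ := increment_props gpj hpj_cont hpj_max ajp hajp hajp_pos
  have hσb : 0 < 1 / (1 - bjp) := one_div_pos.2 (by linarith [hbjp.2])
  have hσa : 0 < 1 / (1 - bpi) := hσb.trans hσ
  set A : ℝ → ℝ := fun y => gip 1 (api + y) - 1 with hAdef
  set B : ℝ → ℝ := fun z => gpj 1 (ajp + z) - 1 with hBdef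
  have hip1 : ∀ s, 0 ≤ s → 1 ≤ gip 1 s := fun s hs =>
    (le_max_left _ _).trans (hip_max 1 s zero_le_one hs)
  have hpjs : ∀ s w, 0 ≤ s → 0 ≤ w → s ≤ gpj s w := fun s w hs hw =>
    (le_max_left _ _).trans (hpj_max s w hs hw)
  have upper : ∀ x, 0 < x → gij 1 (api * ajp + x) - 1 ≤ A (x / ajp) := by
    intro x hx
    have hw : 0 ≤ api * ajp + x := by positivity
    have hs : 0 ≤ api + x / ajp := by positivity
    have hbdd : BddBelow {r | ∃ s : ℝ, 0 ≤ s ∧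
        r = gip 1 s + gpj s (api * ajp + x) - s} := by
      refine ⟨1, ?_⟩
      rintro r ⟨s, hs, rfl⟩
      linarith [hip1 s hs, hpjs s _ hs hw]
    have h1 : gpj (api + x / ajp) (api * ajp + x) = api + x / ajp := by
      have h := hpj_hom (api + x / ajp) 1 ajp hs zero_le_one hajp_pos.le
      rw [hajp.1.2, mul_one, show (api + x / ajp) * ajp = api * ajp + x by field_simp] at h
      exact h
    have h2 := csInf_le hbdd ⟨api + x / ajp, hs, rfl⟩
    rw [← hgij, h1] at h2
    simp only [hAdef]
    linarith
  have lower : ∀ κ, 0 < κ → κ < 1 → ∃ δ > 0, ∀ x, 0 < x → x ≤ δ →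
      κ * A (x / ajp) ≤ gij 1 (api * ajp + x) - 1 := by
    intro κ hκ0 hκ1
    obtain ⟨l, hl0, hl1, δ₁, hδ₁, h₁⟩ :=
      almost_monotone A _ hσa hAc hApos hA hAlow κ hκ0 hκ1
    -- only `s > api * ajp / 2` is handled through `B`; smaller `s` cost at least this constant
    have hs0 : 0 < api * ajp / 2 := by positivity
    obtain ⟨δ₂, hδ₂, h₂⟩ := dominates A B _ _ hσb hσ hAc hBc hApos hBpos hA hB hBlow
      (ajp * (1 - l) / (api + 1)) (1 / (api * ajp / 2))
      (div_pos (mul_pos hajp_pos (by linarith)) (by positivity)) (by positivity)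
    obtain ⟨δ₃, hδ₃, h₃⟩ := eventually_small A _ hσa hAc hApos hA (api * ajp / 2) hs0
    refine ⟨ajp * min (min δ₁ δ₂) (min δ₃ 1), mul_pos hajp_pos
      (lt_min (lt_min hδ₁ hδ₂) (lt_min hδ₃ one_pos)), fun x hx hxd => ?_⟩
    have htd : x / ajp ≤ min (min δ₁ δ₂) (min δ₃ 1) := by
      rw [div_le_iff₀ hajp_pos]; linarith
    obtain ⟨t, ht, rfl⟩ : ∃ t, 0 < t ∧ x = ajp * t :=
      ⟨x / ajp, by positivity, by field_simp⟩
    rw [mul_div_cancel_left₀ _ hajp_pos.ne'] at htd ⊢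
    have ht1 := (htd.trans (min_le_left _ _)).trans (min_le_left _ _)
    have ht2 := (htd.trans (min_le_left _ _)).trans (min_le_right _ _)
    have ht3 := (htd.trans (min_le_right _ _)).trans (min_le_left _ _)
    have ht4 := (htd.trans (min_le_right _ _)).trans (min_le_right _ _)
    have hw : 0 ≤ api * ajp + ajp * t := by positivity
    have hAt := hApos t ht
    have hκA : κ * A t ≤ A t := by nlinarith
    suffices h : 1 + κ * A t ≤ gij 1 (api * ajp + ajp * t) by linarith
    rw [hgij]
    refine le_csInf ⟨_, 0, le_rfl, rfl⟩ ?_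
    rintro r ⟨s, hs, rfl⟩
    rcases le_total (l * t) (s - api) with hcase | hcase
    · have h := h₁ t ht ht1 (s - api) hcase
      have h' : A (s - api) = gip 1 s - 1 := by
        simp only [hAdef]; rw [add_sub_cancel]
      linarith [hpjs s _ hs hw]
    rcases le_or_gt s (api * ajp / 2) with hsmall | hsbig
    · have h := (le_max_right _ _).trans (hpj_max s _ hs hw)
      have := h₃ t ht ht3
      have : 0 < ajp * t := by positivity
      linarith [hip1 s hs]
    · have hspos : 0 < s := hs0.trans hsbig
      set z := (api * ajp + ajp * t) / s - ajp with hz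
      have hzs : z * s = ajp * (t - (s - api)) := by rw [hz]; field_simp; ring
      have hsa : s ≤ api + 1 := by nlinarith
      have hzl : ajp * (1 - l) / (api + 1) * t ≤ z := by
        have e1 : ajp * (1 - l) * t ≤ z * s := by
          rw [hzs, mul_assoc]
          exact mul_le_mul_of_nonneg_left (by linarith) hajp_pos.le
        have e0 : 0 < ajp * (1 - l) * t :=
          mul_pos (mul_pos hajp_pos (by linarith)) ht
        have hz0 : 0 < z := pos_of_mul_pos_left (e0.trans_le e1) hspos.le
        rw [div_mul_eq_mul_div, div_le_iff₀ (by positivity)]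
        exact e1.trans (mul_le_mul_of_nonneg_left hsa hz0.le)
      have h := h₂ t ht ht2 z hzl
      rw [div_mul_eq_mul_div, one_mul, div_le_iff₀ hs0] at h
      have hB0 : 0 ≤ B z := by
        by_contra hneg
        nlinarith
      have hg : gpj s (api * ajp + ajp * t) = s * (1 + B z) := by
        have e := hpj_hom s 1 ((api * ajp + ajp * t) / s) hs zero_le_one (by positivity)
        rw [mul_one, mul_div_cancel₀ _ hspos.ne'] at e
        rw [e]
        simp only [hBdef, hz]
        rw [add_sub_cancel, add_sub_cancel]
      have : B z * (api * ajp / 2) ≤ B z * s := mul_le_mul_of_nonneg_left hsbig.le hB0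
      rw [hg]
      linarith [hip1 s hs]
  have main : Tendsto (fun x => (gij 1 (api * ajp + x) - 1) / A (x / ajp))
      (𝓝[>] 0) (𝓝 1) := by
    refine tendsto_order.2 ⟨fun κ hκ => ?_, fun κ hκ => ?_⟩
    · obtain ⟨κ', hκ', hκ1⟩ := exists_between (max_lt hκ one_pos)
      obtain ⟨δ, hδ, h⟩ := lower κ' ((le_max_right _ _).trans_lt hκ') hκ1
      filter_upwards [Ioc_mem_nhdsGT hδ] with x hx
      refine ((le_max_left _ _).trans_lt hκ').trans_le ?_
      rw [le_div_iff₀ (hApos _ (div_pos hx.1 hajp_pos))]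
      exact h x hx.1 hx.2
    · filter_upwards [self_mem_nhdsWithin] with x hx
      refine lt_of_le_of_lt ?_ hκ
      rw [div_le_one (hApos _ (div_pos hx hajp_pos))]
      exact upper x hx
  refine ⟨main, fun m hm => ?_⟩
  have hscale : ∀ c : ℝ, 0 < c → Tendsto (fun x : ℝ => c * x) (𝓝[>] 0) (𝓝[>] 0) := by
    intro c hc
    refine tendsto_nhdsWithin_iff.2 ⟨?_, ?_⟩
    · have : Tendsto (fun x : ℝ => c * x) (𝓝 0) (𝓝 (c * 0)) :=
        (continuous_const.mul continuous_id).tendsto 0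
      rw [mul_zero] at this
      exact this.mono_left nhdsWithin_le_nhds
    · filter_upwards [self_mem_nhdsWithin] with x hx
      exact mul_pos hc hx
  have t1 := main.comp (hscale m hm)
  have t2 := (hA m hm).comp (hscale ajp⁻¹ (by positivity))
  have t3 := (t1.mul t2).div main one_ne_zero
  rw [one_mul, div_one] at t3
  refine t3.congr' ?_
  filter_upwards [self_mem_nhdsWithin] with x hx
  have p1 : A (x / ajp) ≠ 0 := (hApos _ (div_pos hx hajp_pos)).ne'
  have p2 : A (m * x / ajp) ≠ 0 := (hApos _ (div_pos (mul_pos hm hx) hajp_pos)).ne'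
  simp only [Function.comp]
  change (gij 1 (api * ajp + m * x) - 1) / A (m * x / ajp)
    * (A (m * (ajp⁻¹ * x)) / A (ajp⁻¹ * x))
      / ((gij 1 (api * ajp + x) - 1) / A (x / ajp)) = _
  rw [show m * (ajp⁻¹ * x) = m * x / ajp by ring, show ajp⁻¹ * x = x / ajp by ring,
    div_mul_div_cancel₀ p2, div_div_div_cancel_right₀ p1]
end

section
/- In the two-edge chain setting, suppose α_{π|i} > 0, α_{j|π} > 0, and σ_a = σ_b = σ ≥ 1. Then the minimized function f(x) = g_{ij}(1, α_{π|i}·α_{j|π} + x) − 1 is regularly varying at 0+ with index σ: for every fixed λ > 0, f(λx)/f(x) → λ^σ as x → 0+. -/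
/-! The value minimized over `s` is `1 + A(s - α) + s B(w / s - β)`, where `α = api`, `β = ajp`,
`w = αβ + x`, `A(y) = gip 1 (α + y) - 1` and `B(z) = gpj 1 (β + z) - 1`.  It is enough to show that
for every `K > 1`, every `l > 0` and all small `x`, any competitor `s` for `x` can be replaced by a
competitor `s'` for `l x` whose excess over `1` is at most `K l ^ σ` times as large: this gives
`f (l x) ≤ K l ^ σ f x`, and the same bound with `l⁻¹` in place of `l` gives the reverse estimate.

With `s = α + y` the competitor `s'` is
* `α` when `y ≤ 0` (the whole cost is put on the second edge),
* `α + l x / β` when `y ≥ x / β` (the whole cost is put on the first edge),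
* `α + l y` in between.

In the last case the argument of `B` is rescaled by a factor which is only close to `l`, so local
uniformity of regular variation is required (`RV0.locally_uniform`, `RV0.scale_le`); it
follows from continuity by a Baire category argument.  No monotonicity of `A` and `B` is assumed, and
in the first two cases it is replaced by the fact that a regularly varying function of positive index
is almost increasing near `0` (`RV0.almost_mono`).  The tie `σ_a = σ_b` lets both terms scale by the
same `l ^ σ`. -/

open Filter Topology

lemma exists_cube_le {K : ℝ} (hK : 1 < K) : ∃ k : ℝ, 1 < k ∧ k * k * k ≤ K := by
  have h1 : 1 < √K := Real.lt_sqrt_of_sq_lt (by simpa using hK)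
  have h2 : 1 < √√K := Real.lt_sqrt_of_sq_lt (by simpa using h1)
  refine ⟨√√K, h2, ?_⟩
  have e1 : √√K * √√K = √K := Real.mul_self_sqrt (by positivity)
  have e2 : √K * √K = K := Real.mul_self_sqrt (by positivity)
  have h3 : √√K ≤ √K := by nlinarith
  rw [e1]; nlinarith

/-! ### Regular variation at `0⁺` -/

/-- The upper half of regular variation at a single scale `l`, with an explicit threshold. -/
lemma RV0.le_mul {F : ℝ → ℝ} {σ : ℝ} (h : RV0 F σ) (hpos : ∀ z, 0 < z → 0 < F z)
    {K l : ℝ} (hK : 1 < K) (hl : 0 < l) :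
    ∃ δ > 0, ∀ z, 0 < z → z < δ → F (l * z) ≤ K * l ^ σ * F z := by
  have hp : 0 < l ^ σ := Real.rpow_pos_of_pos hl σ
  have h1 : ∀ᶠ x in 𝓝[>] (0:ℝ), F (l * x) / F x < K * l ^ σ :=
    (h l hl).eventually (gt_mem_nhds (by nlinarith))
  obtain ⟨δ, hδ, hs⟩ := mem_nhdsGT_iff_exists_Ioo_subset.1 h1
  refine ⟨δ, hδ, fun z hz hzδ => ?_⟩
  have h2 : F (l * z) / F z < K * l ^ σ := hs ⟨hz, hzδ⟩
  exact ((div_lt_iff₀ (hpos z hz)).1 h2).le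

/-- The lower half of regular variation at a single scale `l`: the upper half at scale `l⁻¹`. -/
lemma RV0.mul_le {F : ℝ → ℝ} {σ : ℝ} (h : RV0 F σ) (hpos : ∀ z, 0 < z → 0 < F z)
    {K l : ℝ} (hK : 1 < K) (hl : 0 < l) :
    ∃ δ > 0, ∀ z, 0 < z → z < δ → l ^ σ * F z ≤ K * F (l * z) := by
  obtain ⟨δ, hδ, H⟩ := h.le_mul hpos hK (inv_pos.2 hl)
  refine ⟨δ / l, by positivity, fun z hz hzδ => ?_⟩
  have h1 := H (l * z) (by positivity) (by rw [lt_div_iff₀ hl] at hzδ; linarith)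
  rw [inv_mul_cancel_left₀ hl.ne', Real.inv_rpow hl.le] at h1
  have hp : 0 < l ^ σ := Real.rpow_pos_of_pos hl σ
  calc l ^ σ * F z ≤ l ^ σ * (K * (l ^ σ)⁻¹ * F (l * z)) := by gcongr
    _ = K * F (l * z) := by field_simp

/-- Local uniformity at scale `1`.  The times `t` at which the bound at scale `exp t` holds for all
`z` below a given threshold form closed sets covering `ℝ`; by Baire one of them contains an
interval around some `t₀`, and dividing by the (pointwise) behaviour at `exp t₀` recentres it. -/
lemma RV0.locally_uniform {F : ℝ → ℝ} {σ : ℝ} (h : RV0 F σ) (hpos : ∀ z, 0 < z → 0 < F z)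
    (hc : ContinuousOn F (Set.Ioi 0)) {K : ℝ} (hK : 1 < K) :
    ∃ q > 1, ∃ δ > 0, ∀ z, 0 < z → z < δ → ∀ μ, 1 / q ≤ μ → μ ≤ q → F (μ * z) ≤ K * F z := by
  obtain ⟨k, hk, hkK⟩ := exists_cube_le hK
  let E : ℕ → Set ℝ := fun n => {t | ∀ z, 0 < z → z < 1 / ((n:ℝ) + 1) →
    F (Real.exp t * z) ≤ k * (Real.exp t) ^ σ * F z}
  have hEc : ∀ n, IsClosed (E n) := by
    intro n
    have hE : E n = ⋂ (z : ℝ) (_ : 0 < z) (_ : z < 1 / ((n:ℝ) + 1)),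
        {t | F (Real.exp t * z) ≤ k * (Real.exp t) ^ σ * F z} := by
      ext t; simp [E]
    rw [hE]
    refine isClosed_iInter fun z => isClosed_iInter fun hz => isClosed_iInter fun _ => ?_
    refine isClosed_le ?_ ?_
    · exact hc.comp_continuous (by fun_prop) (fun t => mul_pos (Real.exp_pos t) hz)
    · exact (continuous_const.mul (Real.continuous_exp.rpow_const
        (fun t => Or.inl (Real.exp_pos t).ne'))).mul continuous_const
  have hEU : (⋃ n, E n) = Set.univ := by
    refine Set.eq_univ_of_forall fun t => ?_
    obtain ⟨δ, hδ, H⟩ := h.le_mul hpos hk (Real.exp_pos t)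
    obtain ⟨n, hn⟩ := exists_nat_one_div_lt hδ
    exact Set.mem_iUnion.2 ⟨n, fun z hz hzn => H z hz (hzn.trans hn)⟩
  obtain ⟨n, t₀, ht₀⟩ := nonempty_interior_of_iUnion_of_closed hEc hEU
  obtain ⟨r, hr, hball⟩ := Metric.isOpen_iff.1 isOpen_interior t₀ ht₀
  obtain ⟨δ, hδ, H⟩ := h.mul_le hpos hk (Real.exp_pos t₀)
  -- `μ ^ σ ≤ k` for `μ` near `1` absorbs the factor `μ ^ σ`.
  have hcont : ContinuousAt (fun t : ℝ => (Real.exp t) ^ σ) 0 :=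
    Real.continuous_exp.continuousAt.rpow_const (Or.inl (Real.exp_pos 0).ne')
  have hev : ∀ᶠ t in 𝓝 (0:ℝ), (Real.exp t) ^ σ < k :=
    hcont.eventually (gt_mem_nhds (by simpa using hk))
  obtain ⟨r', hr', hb'⟩ := Metric.eventually_nhds_iff.1 hev
  set ρ := min r r' / 2 with hρ
  have hρ0 : 0 < ρ := by positivity
  have hρr : ρ < r := by have := min_le_left r r'; have : 0 < min r r' := by positivity
                         linarith
  have hρr' : ρ < r' := by have := min_le_right r r'; have : 0 < min r r' := by positivity
                           linarith
  set e₀ := Real.exp t₀ with he₀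
  have he₀p : 0 < e₀ := Real.exp_pos _
  refine ⟨Real.exp ρ, Real.one_lt_exp_iff.2 hρ0, e₀ * min δ (1 / ((n:ℝ) + 1)), by positivity, ?_⟩
  intro z hz hzδ μ hμ1 hμ2
  have hμ : 0 < μ := lt_of_lt_of_le (by positivity) hμ1
  set t := Real.log μ with ht
  have hμt : Real.exp t = μ := Real.exp_log hμ
  have ht2 : t ≤ ρ := (Real.log_le_iff_le_exp hμ).2 hμ2
  have ht1 : -ρ ≤ t := by
    rw [Real.le_log_iff_exp_le hμ, Real.exp_neg, ← one_div]; exact hμ1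
  have htabs : |t| ≤ ρ := abs_le.2 ⟨ht1, ht2⟩
  have hw : 0 < z / e₀ := by positivity
  have hwlt : z / e₀ < min δ (1 / ((n:ℝ) + 1)) := by rw [div_lt_iff₀ he₀p]; linarith
  have hmem : t₀ + t ∈ E n := by
    apply interior_subset
    apply hball
    rw [Metric.mem_ball, Real.dist_eq]
    simpa using htabs.trans_lt hρr
  have h1 := hmem (z / e₀) hw (hwlt.trans_le (min_le_right _ _))
  have h2 := H (z / e₀) hw (hwlt.trans_le (min_le_left _ _))
  have h3 : μ ^ σ < k := by
    rw [← hμt]; apply hb'; rw [Real.dist_eq]; simpa using htabs.trans_lt hρr'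
  have ez : e₀ * (z / e₀) = z := by field_simp
  rw [Real.exp_add, hμt, ← he₀] at h1
  have e2 : e₀ * μ * (z / e₀) = μ * z := by field_simp
  rw [e2, Real.mul_rpow he₀p.le hμ.le] at h1
  rw [ez] at h2
  have hFz := hpos z hz
  have hmp : 0 < μ ^ σ := Real.rpow_pos_of_pos hμ σ
  have hFw := hpos _ hw
  calc F (μ * z) ≤ k * (e₀ ^ σ * μ ^ σ) * F (z / e₀) := h1
    _ = (k * μ ^ σ) * (e₀ ^ σ * F (z / e₀)) := by ring
    _ ≤ (k * k) * (k * F z) := by gcongr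
    _ = (k * k * k) * F z := by ring
    _ ≤ K * F z := by gcongr

/-- Local uniformity at an arbitrary scale `l`. -/
lemma RV0.scale_le {F : ℝ → ℝ} {σ : ℝ} (h : RV0 F σ) (hpos : ∀ z, 0 < z → 0 < F z)
    (hc : ContinuousOn F (Set.Ioi 0)) {K l : ℝ} (hK : 1 < K) (hl : 0 < l) :
    ∃ q > 1, ∃ δ > 0, ∀ z, 0 < z → z < δ → ∀ μ, 1 / q ≤ μ → μ ≤ q →
      F (μ * (l * z)) ≤ K * l ^ σ * F z := by
  obtain ⟨k, hk, hkK⟩ := exists_cube_le hK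
  obtain ⟨q, hq, δ, hδ, H⟩ := h.locally_uniform hpos hc hk
  obtain ⟨δ', hδ', H'⟩ := h.le_mul hpos hk hl
  refine ⟨q, hq, min (δ / l) δ', by positivity, fun z hz hzδ μ h1 h2 => ?_⟩
  have hz1 : l * z < δ := by
    have := hzδ.trans_le (min_le_left _ _); rw [lt_div_iff₀ hl] at this; linarith
  have hp : 0 < l ^ σ := Real.rpow_pos_of_pos hl σ
  have hFz := hpos z hz
  have hkk : k * k ≤ K := by nlinarith
  calc F (μ * (l * z)) ≤ k * F (l * z) := H _ (by positivity) hz1 μ h1 h2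
    _ ≤ k * (k * l ^ σ * F z) := by
        gcongr; exact H' z hz (hzδ.trans_le (min_le_right _ _))
    _ = (k * k) * (l ^ σ * F z) := by ring
    _ ≤ K * (l ^ σ * F z) := by gcongr
    _ = _ := by ring

/-- A regularly varying function of positive index is almost increasing near `0`: `F` does not
decrease under multiplication by a fixed `q > 1`, and within one factor `q` it varies by a factor at
most `K`.  The lower bound `hbd` away from `0` removes the restriction to small `v`. -/
lemma RV0.almost_mono {F : ℝ → ℝ} {σ : ℝ} (h : RV0 F σ) (hpos : ∀ z, 0 < z → 0 < F z)
    (hc : ContinuousOn F (Set.Ioi 0)) (hσ : 0 < σ)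
    (hlim : ∀ c > 0, ∃ δ > 0, ∀ u, 0 < u → u < δ → F u ≤ c)
    (hbd : ∀ d > 0, ∃ c > 0, ∀ v, d ≤ v → c ≤ F v) {K : ℝ} (hK : 1 < K) :
    ∃ δ > 0, ∀ u, 0 < u → u < δ → ∀ v, u ≤ v → F u ≤ K * F v := by
  obtain ⟨q, hq, δ, hδ, H⟩ := h.locally_uniform hpos hc hK
  have hq0 : 0 < q := by linarith
  obtain ⟨δ', hδ', H'⟩ := h.mul_le hpos (Real.one_lt_rpow hq hσ) hq0
  have hstep : ∀ z, 0 < z → z < δ' → F z ≤ F (q * z) := fun z hz hz' =>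
    le_of_mul_le_mul_left (H' z hz hz') (Real.rpow_pos_of_pos hq0 σ)
  obtain ⟨c, hc0, hcF⟩ := hbd (min δ δ') (by positivity)
  obtain ⟨δ'', hδ'', H''⟩ := hlim c hc0
  have hiter : ∀ n : ℕ, ∀ u, 0 < u → q ^ n * u < δ' → F u ≤ F (q ^ n * u) := by
    intro n
    induction n with
    | zero => intro u _ _; simp
    | succ n ih =>
      intro u hu hun
      have e : q ^ (n + 1) * u = q * (q ^ n * u) := by ring
      have h0 : 0 < q ^ n * u := by positivity
      have hlt : q ^ n * u < δ' := by rw [e] at hun; nlinarith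
      rw [e]; exact (ih u hu hlt).trans (hstep _ h0 hlt)
  refine ⟨δ'', hδ'', fun u hu huδ v huv => ?_⟩
  have hv : 0 < v := hu.trans_le huv
  have hFv := hpos v hv
  rcases le_or_gt (min δ δ') v with hcase | hcase
  · have := H'' u hu huδ
    have := hcF v hcase
    nlinarith
  · obtain ⟨n, hn1, hn2⟩ := exists_nat_pow_near (one_le_div hu |>.2 huv) hq
    rw [le_div_iff₀ hu] at hn1
    rw [div_lt_iff₀ hu] at hn2
    have hp : 0 < q ^ n * u := by positivity
    have h1 := hiter n u hu (hn1.trans_lt (hcase.trans_le (min_le_right _ _)))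
    have h2 := H v hv (hcase.trans_le (min_le_left _ _)) (q ^ n * u / v)
      (by rw [div_le_div_iff₀ hq0 hv, one_mul]; rw [pow_succ] at hn2; nlinarith)
      ((div_le_one hv).2 hn1 |>.trans hq.le)
    rw [div_mul_cancel₀ _ hv.ne'] at h2
    exact h1.trans h2

/-! ### The two edge functions -/

/-- Regularity of the excess `y ↦ g 1 (a + y) - 1`: it is continuous, positive for `y > 0`, tends to
`0` at `0`, and is bounded below away from `0`. -/
lemma excess_facts {g : ℝ → ℝ → ℝ} {a : ℝ}
    (hcont : ContinuousOn (fun p : ℝ × ℝ => g p.1 p.2) (Set.Ici 0 ×ˢ Set.Ici 0))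
    (hmax : ∀ u v : ℝ, 0 ≤ u → 0 ≤ v → max u v ≤ g u v)
    (ha : IsGreatest {y | y ∈ Set.Icc (0:ℝ) 1 ∧ g 1 y = 1} a) (ha0 : 0 < a) :
    ContinuousOn (fun y => g 1 (a + y) - 1) (Set.Ioi 0) ∧
    (∀ z, 0 < z → 0 < g 1 (a + z) - 1) ∧
    (∀ c > 0, ∃ δ > 0, ∀ u, 0 < u → u < δ → g 1 (a + u) - 1 ≤ c) ∧
    (∀ d > 0, ∃ c > 0, ∀ v, d ≤ v → c ≤ g 1 (a + v) - 1) := by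
  have hC : ContinuousOn (fun y => g 1 (a + y) - 1) (Set.Ici 0) := by
    refine ContinuousOn.sub ?_ continuousOn_const
    refine hcont.comp (f := fun y : ℝ => ((1:ℝ), a + y)) (by fun_prop) ?_
    intro y hy
    have hy' : (0:ℝ) ≤ y := hy
    exact ⟨by simp, by simp; linarith⟩
  have hP : ∀ z, 0 < z → 0 < g 1 (a + z) - 1 := by
    intro z hz
    have h1 := hmax 1 (a + z) zero_le_one (by linarith)
    rcases le_or_gt (a + z) 1 with h | h
    · have h2 : 1 ≤ g 1 (a + z) := (le_max_left _ _).trans h1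
      rcases h2.eq_or_lt with h3 | h3
      · have := ha.2 (show a + z ∈ {y | y ∈ Set.Icc (0:ℝ) 1 ∧ g 1 y = 1} from
          ⟨⟨by linarith, h⟩, h3.symm⟩)
        linarith
      · linarith
    · have := (le_max_right _ _).trans h1
      linarith
  refine ⟨hC.mono Set.Ioi_subset_Ici_self, hP, ?_, ?_⟩
  · intro c hc
    have h0 := (hC 0 (by simp)).mono_left (nhdsWithin_mono 0 Set.Ioi_subset_Ici_self)
    have e0 : g 1 (a + 0) - 1 = 0 := by rw [add_zero, ha.1.2, sub_self]
    have h1 : ∀ᶠ u in 𝓝[>] (0:ℝ), g 1 (a + u) - 1 < c :=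
      h0.eventually (gt_mem_nhds (by simpa only [e0] using hc))
    obtain ⟨δ, hδ, hs⟩ := mem_nhdsGT_iff_exists_Ioo_subset.1 h1
    exact ⟨δ, hδ, fun u hu hu' => (show g 1 (a + u) - 1 < c from hs ⟨hu, hu'⟩).le⟩
  · intro d hd
    have hfar : ∀ v, 1 ≤ v → a ≤ g 1 (a + v) - 1 := fun v hv => by
      have := (le_max_right _ _).trans (hmax 1 (a + v) zero_le_one (by linarith))
      linarith
    rcases le_or_gt d 1 with h | h
    · obtain ⟨m, hm, hmin⟩ := isCompact_Icc.exists_isMinOn (Set.nonempty_Icc.2 h)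
        (hC.mono (fun y hy => show (0:ℝ) ≤ y from hd.le.trans hy.1))
      refine ⟨min a (g 1 (a + m) - 1), lt_min ha0 (hP m (hd.trans_le hm.1)), fun v hv => ?_⟩
      rcases le_or_gt v 1 with h' | h'
      · exact (min_le_right _ _).trans (hmin ⟨hv, h'⟩)
      · exact (min_le_left _ _).trans (hfar v h'.le)
    · exact ⟨a, ha0, fun v hv => hfar v (h.le.trans hv)⟩

/-- The cost `g s w - s` is bounded below as long as `w / s - b` stays away from `0`, including
`s = 0`: for `s ≥ w / 2` homogeneity reduces to the excess, for `s < w / 2` use `g s w ≥ w`. -/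
lemma cost_lower {g : ℝ → ℝ → ℝ} {b c d : ℝ}
    (hmax : ∀ u v : ℝ, 0 ≤ u → 0 ≤ v → max u v ≤ g u v)
    (hhom : ∀ s w : ℝ, 0 < s → 0 ≤ w → g s w - s = s * (g 1 (b + (w / s - b)) - 1))
    (hc : 0 < c) (hcd : ∀ v, d ≤ v → c ≤ g 1 (b + v) - 1)
    {s w : ℝ} (hs : 0 ≤ s) (hw : 0 < w) (hd : 0 < s → d ≤ w / s - b) :
    w / 2 * min c 1 ≤ g s w - s := by
  have hm1 : min c 1 ≤ 1 := min_le_right _ _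
  have hmc : min c 1 ≤ c := min_le_left _ _
  rcases le_or_gt (w / 2) s with h | h
  · have hs0 : 0 < s := by linarith
    rw [hhom s w hs0 hw.le]
    have h2 := hcd _ (hd hs0)
    have hm : 0 < min c 1 := lt_min hc one_pos
    exact mul_le_mul h (hmc.trans h2) hm.le hs
  · have := (le_max_right _ _).trans (hmax s w hs hw.le)
    nlinarith

/-! ### Comparison of competitors -/

set_option maxHeartbeats 1000000 in
/-- Transfer of competitors: each competitor `s` for `x` yields a competitor `s'` for `l * x` whose
excess is larger by a factor at most `K * l ^ σ`. -/
lemma exists_competitor {g h : ℝ → ℝ → ℝ} {a b σ : ℝ}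
    (hg_cont : ContinuousOn (fun p : ℝ × ℝ => g p.1 p.2) (Set.Ici 0 ×ˢ Set.Ici 0))
    (hh_cont : ContinuousOn (fun p : ℝ × ℝ => h p.1 p.2) (Set.Ici 0 ×ˢ Set.Ici 0))
    (hg_max : ∀ u v : ℝ, 0 ≤ u → 0 ≤ v → max u v ≤ g u v)
    (hh_max : ∀ u v : ℝ, 0 ≤ u → 0 ≤ v → max u v ≤ h u v)
    (hhom : ∀ s w : ℝ, 0 < s → 0 ≤ w → h s w - s = s * (h 1 (b + (w / s - b)) - 1))
    (ha : IsGreatest {y | y ∈ Set.Icc (0:ℝ) 1 ∧ g 1 y = 1} a) (ha0 : 0 < a)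
    (hb : IsGreatest {y | y ∈ Set.Icc (0:ℝ) 1 ∧ h 1 y = 1} b) (hb0 : 0 < b)
    (hσ : 0 < σ)
    (hA : RV0 (fun y => g 1 (a + y) - 1) σ) (hB : RV0 (fun z => h 1 (b + z) - 1) σ)
    {K l : ℝ} (hK : 1 < K) (hl : 0 < l) :
    ∃ δ > 0, ∀ x, 0 < x → x < δ → ∀ s, 0 ≤ s → ∃ s', 0 ≤ s' ∧
      g 1 s' + h s' (a * b + l * x) - s' - 1 ≤
        K * l ^ σ * (g 1 s + h s (a * b + x) - s - 1) := by
  obtain ⟨k, hk, hkK⟩ := exists_cube_le hK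
  obtain ⟨cA, pA, limA, bdA⟩ := excess_facts hg_cont hg_max ha ha0
  obtain ⟨cB, pB, limB, bdB⟩ := excess_facts hh_cont hh_max hb hb0
  obtain ⟨δ₁, hδ₁, mA⟩ := hA.almost_mono pA cA hσ limA bdA hk
  obtain ⟨δ₂, hδ₂, mB⟩ := hB.almost_mono pB cB hσ limB bdB hk
  obtain ⟨δ₃, hδ₃, sA⟩ := hA.le_mul pA hk hl
  obtain ⟨δ₄, hδ₄, sB⟩ := hB.le_mul pB hk hl
  obtain ⟨q, hq, δ₅, hδ₅, uB⟩ := hB.scale_le pB cB hk hl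
  obtain ⟨c, hc, hcB⟩ := bdB (b * (k - 1)) (mul_pos hb0 (by linarith))
  obtain ⟨δ₆, hδ₆, smB⟩ := limB (b / 2 * min c 1) (by positivity)
  have hgA : ∀ s, 0 ≤ s → 0 ≤ g 1 s - 1 := fun s hs => by
    have := (le_max_left _ _).trans (hg_max 1 s zero_le_one hs); linarith
  have hhs : ∀ s w, 0 ≤ s → 0 ≤ w → 0 ≤ h s w - s := fun s w hs hw => by
    have := (le_max_left _ _).trans (hh_max s w hs hw); linarith
  have hp : 0 < l ^ σ := Real.rpow_pos_of_pos hl σ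
  have hq1 : 0 < min q k - 1 := by have := lt_min hq hk; linarith
  -- Each bound on `x` is a threshold above, rescaled through `x / b` or `x / a`.
  have hsmall : ∀ᶠ x in 𝓝[>] (0:ℝ), x / b < δ₁ ∧ x / b < δ₃ ∧ x / a < δ₂ ∧ x / a < δ₄ ∧
      x / a < δ₅ ∧ x / a < δ₆ ∧ x / b < (min q k - 1) * a ∧ l * (x / b) < (min q k - 1) * a := by
    have tb : Tendsto (fun x : ℝ => x / b) (𝓝[>] 0) (𝓝 0) := by
      have : ContinuousAt (fun x : ℝ => x / b) 0 := by fun_prop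
      simpa using this.tendsto.mono_left nhdsWithin_le_nhds
    have ta : Tendsto (fun x : ℝ => x / a) (𝓝[>] 0) (𝓝 0) := by
      have : ContinuousAt (fun x : ℝ => x / a) 0 := by fun_prop
      simpa using this.tendsto.mono_left nhdsWithin_le_nhds
    have tl : Tendsto (fun x : ℝ => l * (x / b)) (𝓝[>] 0) (𝓝 0) := by
      simpa using tb.const_mul l
    have hqa : 0 < (min q k - 1) * a := mul_pos hq1 ha0
    filter_upwards [tb.eventually (gt_mem_nhds hδ₁), tb.eventually (gt_mem_nhds hδ₃),
      ta.eventually (gt_mem_nhds hδ₂), ta.eventually (gt_mem_nhds hδ₄),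
      ta.eventually (gt_mem_nhds hδ₅), ta.eventually (gt_mem_nhds hδ₆),
      tb.eventually (gt_mem_nhds hqa), tl.eventually (gt_mem_nhds hqa)]
      with x h1 h2 h3 h4 h5 h6 h7 h8
    exact ⟨h1, h2, h3, h4, h5, h6, h7, h8⟩
  obtain ⟨δ, hδ, hsub⟩ := mem_nhdsGT_iff_exists_Ioo_subset.1 hsmall
  refine ⟨δ, hδ, fun x hx hxδ s hs => ?_⟩
  obtain ⟨hx1, hx3, hx2, hx4, hx5, hx6, hx7, hx8⟩ := hsub ⟨hx, hxδ⟩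
  have hw : 0 < a * b + x := by positivity
  have hw' : 0 < a * b + l * x := by positivity
  have hkk : k * k ≤ K := by nlinarith
  have hk1 : k ≤ K := by nlinarith
  have hsplit : K * l ^ σ * (g 1 s + h s (a * b + x) - s - 1) =
      K * l ^ σ * (g 1 s - 1) + K * l ^ σ * (h s (a * b + x) - s) := by ring
  have hxa : 0 < x / a := by positivity
  have hxb : 0 < x / b := by positivity
  have hga := hgA s hs
  have hh0 := hhs s (a * b + x) hs hw.le
  rcases le_or_gt s a with hsa | hsa
  · refine ⟨a, ha0.le, ?_⟩
    -- The excess at `s' = a` is `a * B (l * x / a)`.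
    have e1 : h a (a * b + l * x) - a = a * (h 1 (b + l * (x / a)) - 1) := by
      rw [hhom a _ ha0 hw'.le]
      congr 4; field_simp; ring
    have e2 := sB (x / a) hxa hx4
    have key : a * (h 1 (b + x / a) - 1) ≤ k * k * (h s (a * b + x) - s) := by
      rcases le_or_gt (a / k) s with hak | hak
      · have hs0 : 0 < s := lt_of_lt_of_le (by positivity) hak
        rw [hhom s _ hs0 hw.le]
        have hv : x / a ≤ (a * b + x) / s - b := by
          have h1 : (a * b + x) / a ≤ (a * b + x) / s := by gcongr
          have h2 : (a * b + x) / a = b + x / a := by field_simp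
          linarith
        have h3 := mB (x / a) hxa hx2 _ hv
        have h4 : a ≤ s * k := (div_le_iff₀ (by linarith)).1 hak
        have h5 := pB (x / a) hxa
        calc a * (h 1 (b + x / a) - 1) ≤ (s * k) * (k * (h 1 (b + ((a * b + x) / s - b)) - 1)) :=
              mul_le_mul h4 h3 h5.le (by positivity)
          _ = _ := by ring
      · -- Here `s` is bounded away from `a`, so the right side is bounded below.
        have h1 := cost_lower hh_max hhom hc hcB hs hw (fun hs0 => by
          rw [lt_div_iff₀ (by linarith)] at hak
          have : b * k ≤ (a * b + x) / s := by rw [le_div_iff₀ hs0]; nlinarith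
          linarith)
        have h2 := smB (x / a) hxa hx6
        have hm : 0 < min c 1 := lt_min hc one_pos
        calc a * (h 1 (b + x / a) - 1) ≤ a * (b / 2 * min c 1) := by gcongr
          _ = (a * b) / 2 * min c 1 := by ring
          _ ≤ (a * b + x) / 2 * min c 1 := by gcongr; linarith
          _ ≤ h s (a * b + x) - s := h1
          _ ≤ k * k * (h s (a * b + x) - s) := le_mul_of_one_le_left hh0 (by nlinarith)
    have hfin : a * (h 1 (b + l * (x / a)) - 1) ≤ K * l ^ σ * (h s (a * b + x) - s) := by
      calc a * (h 1 (b + l * (x / a)) - 1) ≤ a * (k * l ^ σ * (h 1 (b + x / a) - 1)) := by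
            gcongr
        _ = k * l ^ σ * (a * (h 1 (b + x / a) - 1)) := by ring
        _ ≤ k * l ^ σ * (k * k * (h s (a * b + x) - s)) := by gcongr
        _ = k * k * k * (l ^ σ * (h s (a * b + x) - s)) := by ring
        _ ≤ K * (l ^ σ * (h s (a * b + x) - s)) := by gcongr
        _ = _ := by ring
    have hga' : 0 ≤ K * l ^ σ * (g 1 s - 1) := by positivity
    have e3 : g 1 a = 1 := ha.1.2
    linarith
  rcases le_or_gt (a + x / b) s with hsx | hsx
  · -- At `s' = a + l * x / b` the second edge costs nothing.
    refine ⟨a + l * (x / b), by positivity, ?_⟩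
    have hs'0 : 0 < a + l * (x / b) := by positivity
    have e1 : h (a + l * (x / b)) (a * b + l * x) - (a + l * (x / b)) = 0 := by
      rw [hhom _ _ hs'0 hw'.le]
      have : b + ((a * b + l * x) / (a + l * (x / b)) - b) = b := by
        have : (a * b + l * x) / (a + l * (x / b)) = b := by
          rw [div_eq_iff hs'0.ne']; field_simp
        rw [this]; ring
      rw [this, hb.1.2]; ring
    have e2 := sA (x / b) hxb hx3
    have e3 := mA (x / b) hxb hx1 (s - a) (by linarith)
    rw [add_sub_cancel] at e3
    have hfin : g 1 (a + l * (x / b)) - 1 ≤ K * l ^ σ * (g 1 s - 1) := by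
      calc g 1 (a + l * (x / b)) - 1 ≤ k * l ^ σ * (g 1 (a + x / b) - 1) := e2
        _ ≤ k * l ^ σ * (k * (g 1 s - 1)) := by gcongr
        _ = k * k * (l ^ σ * (g 1 s - 1)) := by ring
        _ ≤ K * (l ^ σ * (g 1 s - 1)) := by gcongr
        _ = _ := by ring
    have hh' : 0 ≤ K * l ^ σ * (h s (a * b + x) - s) := by positivity
    linarith
  · obtain ⟨y, rfl⟩ : ∃ y, s = a + y := ⟨s - a, by ring⟩
    have hy : 0 < y := by linarith
    have hyx : y < x / b := by linarith
    have hbyx : b * y < x := by rw [lt_div_iff₀ hb0] at hyx; linarith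
    have hs0 : 0 < a + y := by positivity
    have hs'0 : 0 < a + l * y := by positivity
    refine ⟨a + l * y, hs'0.le, ?_⟩
    have e2 := sA y hy (hyx.trans hx3)
    set z := (a * b + x) / (a + y) - b with hz
    have hz' : z = (x - b * y) / (a + y) := by rw [hz]; field_simp; ring
    have hz0 : 0 < z := by rw [hz']; apply div_pos <;> linarith
    have hza : z < x / a := by
      have h1 : 0 < b * y * a := by positivity
      have h2 : 0 < x * y := by positivity
      rw [hz', div_lt_div_iff₀ hs0 ha0]; linarith
    have hly : l * y ≤ (min q k - 1) * a :=
      (mul_le_mul_of_nonneg_left hyx.le hl.le).trans hx8.le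
    have hyq : y ≤ (min q k - 1) * a := by linarith
    have hlyp : 0 < l * y := by positivity
    have hm0 : 0 < min q k := by linarith
    have r1 : a + y ≤ min q k * (a + l * y) := by
      have := mul_pos hm0 hlyp
      linarith
    have r2 : a + l * y ≤ min q k * (a + y) := by
      have := mul_pos hm0 hy
      linarith
    have hmq : min q k ≤ q := min_le_left _ _
    have hmk : min q k ≤ k := min_le_right _ _
    have r1' : a + y ≤ q * (a + l * y) := r1.trans (by gcongr)
    have r2' : a + l * y ≤ q * (a + y) := r2.trans (by gcongr)
    have r2'' : a + l * y ≤ k * (a + y) := r2.trans (by gcongr)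
    have e3 := uB z hz0 (hza.trans hx5) ((a + y) / (a + l * y))
      (by rw [div_le_div_iff₀ (by linarith) hs'0]; linarith)
      (by rw [div_le_iff₀ hs'0]; exact r1')
    have e4 : (a + y) / (a + l * y) * (l * z) = (a * b + l * x) / (a + l * y) - b := by
      rw [hz']; field_simp; ring
    simp only [e4] at e3
    have hBz := pB z hz0
    have eh : h (a + y) (a * b + x) - (a + y) = (a + y) * (h 1 (b + z) - 1) :=
      hhom _ _ hs0 hw.le
    have hBfin : h (a + l * y) (a * b + l * x) - (a + l * y) ≤
        K * l ^ σ * (h (a + y) (a * b + x) - (a + y)) := by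
      rw [hhom _ _ hs'0 hw'.le, eh]
      calc (a + l * y) * (h 1 (b + ((a * b + l * x) / (a + l * y) - b)) - 1)
          ≤ (a + l * y) * (k * l ^ σ * (h 1 (b + z) - 1)) := by gcongr
        _ ≤ (k * (a + y)) * (k * l ^ σ * (h 1 (b + z) - 1)) := by gcongr
        _ = k * k * (l ^ σ * ((a + y) * (h 1 (b + z) - 1))) := by ring
        _ ≤ K * (l ^ σ * ((a + y) * (h 1 (b + z) - 1))) := by gcongr
        _ = _ := by ring
    have hAfin : g 1 (a + l * y) - 1 ≤ K * l ^ σ * (g 1 (a + y) - 1) := by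
      refine e2.trans ?_
      gcongr
    linarith

/-- The infimum stays strictly above `1` for `x > 0`: competitors `s ≥ a + x / (2 * b)` pay on the
first edge, the others on the second. -/
lemma exists_pos_lower {g h : ℝ → ℝ → ℝ} {a b : ℝ}
    (hg_cont : ContinuousOn (fun p : ℝ × ℝ => g p.1 p.2) (Set.Ici 0 ×ˢ Set.Ici 0))
    (hh_cont : ContinuousOn (fun p : ℝ × ℝ => h p.1 p.2) (Set.Ici 0 ×ˢ Set.Ici 0))
    (hg_max : ∀ u v : ℝ, 0 ≤ u → 0 ≤ v → max u v ≤ g u v)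
    (hh_max : ∀ u v : ℝ, 0 ≤ u → 0 ≤ v → max u v ≤ h u v)
    (hhom : ∀ s w : ℝ, 0 < s → 0 ≤ w → h s w - s = s * (h 1 (b + (w / s - b)) - 1))
    (ha : IsGreatest {y | y ∈ Set.Icc (0:ℝ) 1 ∧ g 1 y = 1} a) (ha0 : 0 < a)
    (hb : IsGreatest {y | y ∈ Set.Icc (0:ℝ) 1 ∧ h 1 y = 1} b) (hb0 : 0 < b)
    {x : ℝ} (hx : 0 < x) :
    ∃ c > 0, ∀ s, 0 ≤ s → c ≤ g 1 s + h s (a * b + x) - s - 1 := by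
  obtain ⟨-, -, -, bdA⟩ := excess_facts hg_cont hg_max ha ha0
  obtain ⟨-, -, -, bdB⟩ := excess_facts hh_cont hh_max hb hb0
  obtain ⟨c₁, hc₁, H₁⟩ := bdA (x / (2 * b)) (by positivity)
  obtain ⟨c₂, hc₂, H₂⟩ := bdB ((x / 2) / (a + x / (2 * b))) (by positivity)
  have hw : 0 < a * b + x := by positivity
  refine ⟨min c₁ ((a * b + x) / 2 * min c₂ 1), by positivity, fun s hs => ?_⟩
  have hg1 := (le_max_left _ _).trans (hg_max 1 s zero_le_one hs)
  have hh1 := (le_max_left _ _).trans (hh_max s (a * b + x) hs hw.le)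
  rcases le_or_gt (a + x / (2 * b)) s with h1 | h1
  · have h2 := H₁ (s - a) (by linarith)
    rw [add_sub_cancel] at h2
    have := min_le_left c₁ ((a * b + x) / 2 * min c₂ 1)
    linarith
  · have h2 := cost_lower hh_max hhom hc₂ H₂ hs hw (fun hs0 => by
      have hbs : b * s ≤ a * b + x / 2 := by
        have : b * s ≤ b * (a + x / (2 * b)) := by gcongr
        have e : b * (a + x / (2 * b)) = a * b + x / 2 := by field_simp
        linarith
      have h3 : (x / 2) / (a + x / (2 * b)) ≤ (x / 2) / s := by gcongr
      have h4 : (x / 2) / s ≤ (a * b + x) / s - b := by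
        rw [le_sub_iff_add_le, div_add' _ _ _ hs0.ne']
        exact (div_le_div_iff_of_pos_right hs0).2 (by linarith)
      linarith)
    have := min_le_right c₁ ((a * b + x) / 2 * min c₂ 1)
    linarith

/-- For a positive function, one-sided bounds at every scale already give regular variation, since
the bound at scale `l⁻¹` is the reverse bound at scale `l`. -/
lemma rv0_of_le {F : ℝ → ℝ} {σ : ℝ} (hpos : ∀ x, 0 < x → 0 < F x)
    (hle : ∀ K l : ℝ, 1 < K → 0 < l →
      ∃ δ > 0, ∀ x, 0 < x → x < δ → F (l * x) ≤ K * l ^ σ * F x) : RV0 F σ := by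
  intro l hl
  have hp : 0 < l ^ σ := Real.rpow_pos_of_pos hl σ
  rw [tendsto_order]
  constructor
  · intro A hA
    obtain ⟨A', hA1, hA2⟩ := exists_between (max_lt hA hp)
    have hA'0 : 0 < A' := (le_max_right _ _).trans_lt hA1
    obtain ⟨δ, hδ, H⟩ := hle (l ^ σ / A') l⁻¹ ((one_lt_div hA'0).2 hA2) (inv_pos.2 hl)
    filter_upwards [Ioo_mem_nhdsGT (show (0:ℝ) < δ / l by positivity)] with x hx
    have hx0 : 0 < x := hx.1
    have h1 := H (l * x) (by positivity) (by have := hx.2; rw [lt_div_iff₀ hl] at this; linarith)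
    rw [inv_mul_cancel_left₀ hl.ne', Real.inv_rpow hl.le] at h1
    have e : l ^ σ / A' * (l ^ σ)⁻¹ * F (l * x) = F (l * x) / A' := by field_simp
    rw [e, le_div_iff₀ hA'0] at h1
    refine ((le_max_left _ _).trans_lt hA1).trans_le ?_
    rw [le_div_iff₀ (hpos x hx0)]; linarith
  · intro A hA
    obtain ⟨A', hA1, hA2⟩ := exists_between hA
    obtain ⟨δ, hδ, H⟩ := hle (A' / l ^ σ) l ((one_lt_div hp).2 hA1) hl
    filter_upwards [Ioo_mem_nhdsGT hδ] with x hx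
    have h1 := H x hx.1 hx.2
    rw [div_mul_cancel₀ _ hp.ne'] at h1
    exact ((div_le_iff₀ (hpos x hx.1)).2 h1).trans_lt hA2

/-! ### Regular variation of the minimized function -/

/-- **Case A(iii) of Lemma 4** (the tie case, two-edge chain, exponential margins): if
`α_{π|i} > 0`, `α_{j|π} > 0` and `σ_a = σ_b = σ ≥ 1`, then
`f(x) = g_{ij}(1, α_{π|i}·α_{j|π} + x) − 1` is regularly varying at `0⁺` with index
`σ`: for every fixed `λ > 0`, `f(λx)/f(x) → λ^σ` as `x → 0⁺`. -/
theorem stmt_16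
    (gip gpj : ℝ → ℝ → ℝ)
    (hip_cont : ContinuousOn (fun p : ℝ × ℝ => gip p.1 p.2) (Set.Ici 0 ×ˢ Set.Ici 0))
    (hpj_cont : ContinuousOn (fun p : ℝ × ℝ => gpj p.1 p.2) (Set.Ici 0 ×ˢ Set.Ici 0))
    (hip_hom : ∀ t u v : ℝ, 0 ≤ t → 0 ≤ u → 0 ≤ v → gip (t*u) (t*v) = t * gip u v)
    (hpj_hom : ∀ t u v : ℝ, 0 ≤ t → 0 ≤ u → 0 ≤ v → gpj (t*u) (t*v) = t * gpj u v)
    (hip_max : ∀ u v : ℝ, 0 ≤ u → 0 ≤ v → max u v ≤ gip u v)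
    (hpj_max : ∀ u v : ℝ, 0 ≤ u → 0 ≤ v → max u v ≤ gpj u v)
    (api ajp : ℝ)
    (hapi : IsGreatest {y | y ∈ Set.Icc (0:ℝ) 1 ∧ gip 1 y = 1} api)
    (hajp : IsGreatest {y | y ∈ Set.Icc (0:ℝ) 1 ∧ gpj 1 y = 1} ajp)
    (bpi bjp : ℝ)
    (hbpi : bpi ∈ Set.Ico (0:ℝ) 1) (hbjp : bjp ∈ Set.Ico (0:ℝ) 1)
    (hA : RV0 (fun y => gip 1 (api + y) - 1) (1 / (1 - bpi)))
    (hB : RV0 (fun z => gpj 1 (ajp + z) - 1) (1 / (1 - bjp)))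
    (gij : ℝ → ℝ → ℝ)
    (hgij : ∀ u w : ℝ, gij u w = sInf {r | ∃ s : ℝ, 0 ≤ s ∧ r = gip u s + gpj s w - s})
    (hapi_pos : 0 < api) (hajp_pos : 0 < ajp)
    (σ : ℝ) (hσa : 1 / (1 - bpi) = σ) (hσb : 1 / (1 - bjp) = σ) :
    RV0 (fun x => gij 1 (api * ajp + x) - 1) σ := by
  have hσ : 0 < σ := by
    rw [← hσa]; have := hbpi.2; exact one_div_pos.2 (by linarith)
  rw [hσa] at hA
  rw [hσb] at hB
  have hhom : ∀ s w : ℝ, 0 < s → 0 ≤ w →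
      gpj s w - s = s * (gpj 1 (ajp + (w / s - ajp)) - 1) := by
    intro s w hs hw
    have h1 := hpj_hom s 1 (w / s) hs.le zero_le_one (by positivity)
    rw [mul_one, mul_div_cancel₀ _ hs.ne'] at h1
    rw [h1, add_sub_cancel]; ring
  have hne : ∀ w, {r | ∃ s : ℝ, 0 ≤ s ∧ r = gip 1 s + gpj s w - s}.Nonempty :=
    fun w => ⟨_, 0, le_rfl, rfl⟩
  have hbdd : ∀ w, 0 ≤ w → BddBelow {r | ∃ s : ℝ, 0 ≤ s ∧ r = gip 1 s + gpj s w - s} := by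
    rintro w hw
    refine ⟨1, ?_⟩
    rintro r ⟨s, hs, rfl⟩
    have h1 := (le_max_left _ _).trans (hip_max 1 s zero_le_one hs)
    have h2 := (le_max_left _ _).trans (hpj_max s w hs hw)
    linarith
  refine rv0_of_le ?_ ?_
  · intro x hx
    obtain ⟨c, hc, H⟩ := exists_pos_lower hip_cont hpj_cont hip_max hpj_max hhom hapi hapi_pos
      hajp hajp_pos hx
    have : 1 + c ≤ gij 1 (api * ajp + x) := by
      rw [hgij]
      refine le_csInf (hne _) ?_
      rintro r ⟨s, hs, rfl⟩
      have := H s hs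
      linarith
    linarith
  · intro K l hK hl
    obtain ⟨δ, hδ, H⟩ := exists_competitor hip_cont hpj_cont hip_max hpj_max hhom hapi hapi_pos
      hajp hajp_pos hσ hA hB hK hl
    refine ⟨δ, hδ, fun x hx hxδ => ?_⟩
    have hC : 0 < K * l ^ σ := mul_pos (by linarith) (Real.rpow_pos_of_pos hl σ)
    have key : (gij 1 (api * ajp + l * x) - 1) / (K * l ^ σ) + 1 ≤ gij 1 (api * ajp + x) := by
      rw [hgij 1 (api * ajp + x)]
      refine le_csInf (hne _) ?_
      rintro r ⟨s, hs, rfl⟩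
      obtain ⟨s', hs', hle⟩ := H x hx hxδ s hs
      have h1 : gij 1 (api * ajp + l * x) ≤ gip 1 s' + gpj s' (api * ajp + l * x) - s' := by
        rw [hgij]
        exact csInf_le (hbdd _ (by positivity)) ⟨s', hs', rfl⟩
      rw [← le_sub_iff_add_le, div_le_iff₀ hC]
      linarith
    rw [← le_sub_iff_add_le, div_le_iff₀ hC] at key
    linarith
end

section
/- In the two-edge chain setting, suppose α_{π|i} > 0, α_{j|π} = 0, and σ_b > 1. Then the minimized function f(x) = g_{ij}(1, x) − 1 satisfies f(x)/(α_{π|i}·B⁺(x/α_{π|i})) → 1 as x → 0+; in particular f is regularly varying at 0+ with index σ_b, so β_{j|i} = β_{j|π}. -/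
/-!
Write `a s = gip 1 s`, `B z = gpj 1 z - 1`, `C z = B z / z` and `α = api`. Homogeneity gives
`gpj s x - s = s * B (x / s) = x * C (x / s)` for `s > 0`, and `gij 1 x - 1` is the infimum over
`s ≥ 0` of `(a s - 1) + (gpj s x - s)`, a sum of two nonnegative terms. Taking `s = α` bounds it
above by `x * C (x / α) = α * B (x / α)`.

For the matching lower bound, up to a factor `exp (-η)`, split the range of `s`:

* for `s ≥ α * exp ℓ`, the term `a s - 1` is bounded away from `0`, while `x * C (x / α) → 0`;
* for `s ≤ x / z₀`, rescaling by `x` and compactness give `gpj s x - s ≥ c * x`, and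
  `C (x / α) → 0` because `B` has index above `1` (`RV0.tendsto_div_self`);
* in between, `x / s` lies in `(0, z₀]` and exceeds `exp (-ℓ) * (x / α)`, so
  `C (x / s) ≥ exp (-η) * C (x / α)` by Potter's bound (`RV0.almost_mono`).

No monotonicity of `B` is available, so Potter's bound is derived from continuity alone, through
the uniform convergence theorem for regularly varying functions (`additive_potter`).
-/

open Filter Topology

/-- Uniform convergence and Potter's bound in additive form: if all increments of a continuous `k`
tend to `0` at `∞`, then `k` varies at most by `ε (1 + u)` over any far-out interval of length `u`.
Baire's theorem gives a uniform bound on increments of length in `[0, r]`; steps of the fixed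
length `r`, each costing at most `ε r`, do the rest. -/
theorem additive_potter (k : ℝ → ℝ) (hk : Continuous k)
    (h : ∀ u : ℝ, Tendsto (fun t => k (t + u) - k t) atTop (𝓝 0)) {ε : ℝ} (hε : 0 < ε) :
    ∃ T : ℝ, ∀ s, T ≤ s → ∀ u, 0 ≤ u → |k (s + u) - k s| ≤ ε * (1 + u) := by
  have hev : ∀ u : ℝ, ∀ δ : ℝ, 0 < δ → ∃ T : ℝ, ∀ t, T ≤ t → |k (t + u) - k t| ≤ δ := by
    intro u δ hδ
    obtain ⟨T, hT⟩ := (Metric.tendsto_atTop.1 (h u)) δ hδ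
    refine ⟨T, fun t ht => ?_⟩
    have := hT t ht
    rw [Real.dist_eq, sub_zero] at this
    exact this.le
  let E : ℕ → Set ℝ := fun n => {u | ∀ t : ℝ, (n : ℝ) ≤ t → |k (t + u) - k t| ≤ ε / 2}
  have hEc : ∀ n, IsClosed (E n) := by
    intro n
    simp only [E, Set.ofPred_forall]
    refine isClosed_iInter fun t => isClosed_iInter fun _ => ?_
    exact isClosed_le (by fun_prop) continuous_const
  have hEu : ⋃ n, E n = Set.univ := by
    refine Set.eq_univ_of_forall fun u => ?_
    obtain ⟨T, hT⟩ := hev u (ε / 2) (by positivity)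
    obtain ⟨n, hn⟩ := exists_nat_ge T
    exact Set.mem_iUnion.2 ⟨n, fun t ht => hT t (hn.trans ht)⟩
  obtain ⟨n, u₀, hu₀⟩ := nonempty_interior_of_iUnion_of_closed hEc hEu
  obtain ⟨R, hR, hball⟩ := Metric.mem_nhds_iff.1 (mem_interior_iff_mem_nhds.1 hu₀)
  set r := R / 2 with hr
  have hr0 : 0 < r := by positivity
  have hshort : ∀ s : ℝ, n + u₀ ≤ s → ∀ v, 0 ≤ v → v ≤ r → |k (s + v) - k s| ≤ ε := by
    intro s hs v hv hvr
    -- compare both `k (s + v)` and `k s` with `k (s - u₀)`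
    have h1 : u₀ + v ∈ E n := hball (by
      rw [Metric.mem_ball, Real.dist_eq, add_sub_cancel_left, abs_of_nonneg hv]; linarith)
    have h2 : u₀ ∈ E n := interior_subset hu₀
    have h1' := h1 (s - u₀) (by linarith)
    have h2' := h2 (s - u₀) (by linarith)
    rw [show s - u₀ + (u₀ + v) = s + v by ring] at h1'
    rw [show s - u₀ + u₀ = s by ring] at h2'
    rw [abs_le] at *
    constructor <;> linarith [h1'.1, h1'.2, h2'.1, h2'.2]
  obtain ⟨T₂, hT₂⟩ := hev r (ε * r) (by positivity)
  have hsteps : ∀ m : ℕ, ∀ s, T₂ ≤ s → |k (s + m * r) - k s| ≤ ε * (m * r) := by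
    intro m s hs
    induction m with
    | zero => simp
    | succ m ih =>
      have h1 := hT₂ (s + m * r) (by have : 0 ≤ m * r := by positivity
                                     linarith)
      rw [show s + ((m + 1 : ℕ) : ℝ) * r = s + m * r + r by push_cast; ring]
      push_cast
      rw [abs_le] at *
      constructor <;> nlinarith [ih.1, ih.2, h1.1, h1.2]
  refine ⟨max (n + u₀) T₂, fun s hs u hu => ?_⟩
  have hs1 := (le_max_left _ _).trans hs
  have hs2 := (le_max_right _ _).trans hs
  have hm1 := Nat.floor_le (div_nonneg hu hr0.le)
  have hm2 := Nat.lt_floor_add_one (u / r)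
  set m := ⌊u / r⌋₊
  rw [le_div_iff₀ hr0] at hm1
  rw [div_lt_iff₀ hr0] at hm2
  have hmr : (0 : ℝ) ≤ m * r := by positivity
  have h1 := hsteps m s hs2
  have h2 := hshort (s + m * r) (by linarith) (u - m * r) (by linarith) (by linarith)
  rw [show s + m * r + (u - m * r) = s + u by ring] at h2
  have h3 : ε * (m * r) ≤ ε * u := mul_le_mul_of_nonneg_left hm1 hε.le
  rw [abs_le] at *
  constructor <;> linarith [h1.1, h1.2, h2.1, h2.2]

/-- Potter's bound at `0⁺`, in logarithmic form. -/
theorem RV0.potter {B : ℝ → ℝ} {σ : ℝ} (hB : RV0 B σ) (hc : ContinuousOn B (Set.Ioi 0))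
    (hpos : ∀ z, 0 < z → 0 < B z) {ε : ℝ} (hε : 0 < ε) :
    ∃ z₀ : ℝ, 0 < z₀ ∧ ∀ z w, 0 < z → z ≤ w → w ≤ z₀ →
      |(Real.log (B w) - σ * Real.log w) - (Real.log (B z) - σ * Real.log z)|
        ≤ ε * (1 + (Real.log w - Real.log z)) := by
  let k : ℝ → ℝ := fun t => Real.log (B (Real.exp (-t))) + σ * t
  have hk : Continuous k := by
    have h1 : Continuous fun t : ℝ => B (Real.exp (-t)) :=
      hc.comp_continuous (by fun_prop) fun t => Real.exp_pos _
    exact (h1.log fun t => (hpos _ (Real.exp_pos _)).ne').add (by fun_prop)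
  have hinc : ∀ u : ℝ, Tendsto (fun t => k (t + u) - k t) atTop (𝓝 0) := by
    intro u
    have hexp : Tendsto (fun t : ℝ => Real.exp (-t)) atTop (𝓝[>] 0) :=
      tendsto_nhdsWithin_iff.2 ⟨Real.tendsto_exp_neg_atTop_nhds_zero,
        Eventually.of_forall fun t => Real.exp_pos _⟩
    have h1 := (hB (Real.exp (-u)) (Real.exp_pos _)).comp hexp
    have hl : (Real.exp (-u)) ^ σ = Real.exp (-(σ * u)) := by
      rw [← Real.exp_mul]; ring_nf
    rw [hl] at h1
    have h2 := (h1.log (Real.exp_pos _).ne').add_const (σ * u)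
    rw [Real.log_exp, neg_add_cancel] at h2
    refine h2.congr fun t => ?_
    simp only [Function.comp, k]
    rw [← Real.exp_add, show -u + -t = -(t + u) by ring,
      Real.log_div (hpos _ (Real.exp_pos _)).ne' (hpos _ (Real.exp_pos _)).ne']
    ring
  obtain ⟨T, hT⟩ := additive_potter k hk hinc hε
  refine ⟨Real.exp (-T), Real.exp_pos _, fun z w hz hzw hw => ?_⟩
  have hw0 : 0 < w := hz.trans_le hzw
  have hlw : Real.log w ≤ -T := (Real.log_le_iff_le_exp hw0).2 hw
  have hlog := Real.log_le_log hz hzw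
  have := hT (-Real.log w) (by linarith) (Real.log w - Real.log z) (by linarith)
  rw [abs_sub_comm]
  convert this using 2
  simp only [k]
  rw [show -(-Real.log w + (Real.log w - Real.log z)) = Real.log z by ring, neg_neg,
    Real.exp_log hz, Real.exp_log hw0]
  ring

/-- A function of regular variation with index above `1` is `o(z)` at `0⁺`. -/
theorem RV0.tendsto_div_self {B : ℝ → ℝ} {σ : ℝ} (hB : RV0 B σ)
    (hc : ContinuousOn B (Set.Ioi 0)) (hpos : ∀ z, 0 < z → 0 < B z) (hσ : 1 < σ) :
    Tendsto (fun z => B z / z) (𝓝[>] 0) (𝓝 0) := by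
  obtain ⟨z₀, hz₀, hP⟩ := hB.potter hc hpos (ε := (σ - 1) / 2) (by linarith)
  have hlog : Tendsto (fun z => Real.log (B z / z)) (𝓝[>] 0) atBot := by
    have h1 : Tendsto (fun z => (Real.log (B z₀) - σ * Real.log z₀
        + (σ - 1) / 2 * (1 + Real.log z₀)) + (σ - 1) / 2 * Real.log z) (𝓝[>] 0) atBot :=
      tendsto_atBot_add_const_left _ _
        (Real.tendsto_log_nhdsGT_zero.const_mul_atBot (by linarith))
    refine tendsto_atBot_mono' _ ?_ h1
    filter_upwards [Ioc_mem_nhdsGT hz₀] with z hz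
    rw [Real.log_div (hpos z hz.1).ne' hz.1.ne']
    have := (abs_le.1 (hP z z₀ hz.1 hz.2 le_rfl)).1
    nlinarith
  refine (Real.tendsto_exp_atBot.comp hlog).congr' ?_
  filter_upwards [self_mem_nhdsWithin] with z hz
  exact Real.exp_log (div_pos (hpos z hz) hz)

/-- If `B` has index above `1`, then `z ↦ B z / z` is almost increasing near `0⁺`, and the
comparison still holds when the second argument `w` falls below `z` by a factor up to `exp (-ℓ)`. -/
theorem RV0.almost_mono_s17 {B : ℝ → ℝ} {σ : ℝ} (hB : RV0 B σ)
    (hc : ContinuousOn B (Set.Ioi 0)) (hpos : ∀ z, 0 < z → 0 < B z) (hσ : 1 < σ)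
    {η : ℝ} (hη : 0 < η) :
    ∃ ℓ > 0, ∃ z₀ > 0, ∀ z w, 0 < z → z ≤ z₀ → 0 < w → w ≤ z₀ → Real.exp (-ℓ) * z ≤ w →
      Real.exp (-η) * (B z / z) ≤ B w / w := by
  set ε := min (σ - 1) (η / 2) with hεd
  have hε : 0 < ε := lt_min (by linarith) (by linarith)
  have hε1 : ε ≤ σ - 1 := min_le_left _ _
  have hε2 : ε ≤ η / 2 := min_le_right _ _
  obtain ⟨z₀, hz₀, hP⟩ := hB.potter hc hpos hε
  have hden : 0 < ε + (σ - 1) := by linarith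
  refine ⟨η / 2 / (ε + (σ - 1)), by positivity, z₀, hz₀, fun z w hz hzz hw hwz hzw => ?_⟩
  set ℓ := η / 2 / (ε + (σ - 1)) with hℓ
  have hℓe : (ε + (σ - 1)) * ℓ = η / 2 := by rw [hℓ]; field_simp
  have hlog : Real.log z - ℓ ≤ Real.log w := by
    have := Real.log_le_log (by positivity) hzw
    rw [Real.log_mul (Real.exp_pos _).ne' hz.ne', Real.log_exp] at this
    linarith
  have hCz := div_pos (hpos z hz) hz
  have hCw := div_pos (hpos w hw) hw
  rw [← Real.log_le_log_iff (by positivity) hCw, Real.log_mul (Real.exp_pos _).ne' hCz.ne',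
    Real.log_exp, Real.log_div (hpos z hz).ne' hz.ne', Real.log_div (hpos w hw).ne' hw.ne']
  rcases le_total z w with h | h
  · have h1 := (abs_le.1 (hP z w hz h hwz)).1
    have h2 := Real.log_le_log hz h
    nlinarith [mul_nonneg (sub_nonneg.2 hε1) (sub_nonneg.2 h2)]
  · have h1 := (abs_le.1 (hP w z hw h hzz)).2
    have h2 : (ε + (σ - 1)) * (Real.log z - Real.log w) ≤ η / 2 :=
      (mul_le_mul_of_nonneg_left (by linarith) hden.le).trans hℓe.le
    nlinarith

/-- **Case B of Lemma 4 with σ_b > 1** (two-edge chain, exponential margins): if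
`α_{π|i} > 0`, `α_{j|π} = 0` and `σ_b > 1`, then
`f(x) = g_{ij}(1, x) − 1` satisfies `f(x)/(α_{π|i}·B⁺(x/α_{π|i})) → 1` as `x → 0⁺`;
in particular `f ∈ RV⁰⁺_{σ_b}`, so `β_{j|i} = β_{j|π}`. -/
theorem stmt_17
    (gip gpj : ℝ → ℝ → ℝ)
    (hip_cont : ContinuousOn (fun p : ℝ × ℝ => gip p.1 p.2) (Set.Ici 0 ×ˢ Set.Ici 0))
    (hpj_cont : ContinuousOn (fun p : ℝ × ℝ => gpj p.1 p.2) (Set.Ici 0 ×ˢ Set.Ici 0))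
    (hip_hom : ∀ t u v : ℝ, 0 ≤ t → 0 ≤ u → 0 ≤ v → gip (t*u) (t*v) = t * gip u v)
    (hpj_hom : ∀ t u v : ℝ, 0 ≤ t → 0 ≤ u → 0 ≤ v → gpj (t*u) (t*v) = t * gpj u v)
    (hip_max : ∀ u v : ℝ, 0 ≤ u → 0 ≤ v → max u v ≤ gip u v)
    (hpj_max : ∀ u v : ℝ, 0 ≤ u → 0 ≤ v → max u v ≤ gpj u v)
    (api ajp : ℝ)
    (hapi : IsGreatest {y | y ∈ Set.Icc (0:ℝ) 1 ∧ gip 1 y = 1} api)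
    (hajp : IsGreatest {y | y ∈ Set.Icc (0:ℝ) 1 ∧ gpj 1 y = 1} ajp)
    (bpi bjp : ℝ)
    (hbpi : bpi ∈ Set.Ico (0:ℝ) 1) (hbjp : bjp ∈ Set.Ico (0:ℝ) 1)
    (hA : RV0 (fun y => gip 1 (api + y) - 1) (1 / (1 - bpi)))
    (hB : RV0 (fun z => gpj 1 (ajp + z) - 1) (1 / (1 - bjp)))
    (gij : ℝ → ℝ → ℝ)
    (hgij : ∀ u w : ℝ, gij u w = sInf {r | ∃ s : ℝ, 0 ≤ s ∧ r = gip u s + gpj s w - s})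
    (hapi_pos : 0 < api) (hajp_zero : ajp = 0)
    (hσb : 1 < 1 / (1 - bjp)) :
    Tendsto (fun x => (gij 1 x - 1) / (api * (gpj 1 (x / api) - 1)))
        (nhdsWithin 0 (Set.Ioi 0)) (nhds 1)
      ∧ RV0 (fun x => gij 1 x - 1) (1 / (1 - bjp)) := by

  subst hajp_zero
  simp only [zero_add] at hB
  set σ := 1 / (1 - bjp)
  set B : ℝ → ℝ := fun z => gpj 1 z - 1 with hBdef
  have hgα : gip 1 api = 1 := hapi.1.2
  have hBc : ContinuousOn B (Set.Ioi 0) := by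
    refine ContinuousOn.sub ?_ continuousOn_const
    exact hpj_cont.comp (f := fun z : ℝ => ((1 : ℝ), z)) (by fun_prop)
      fun z hz => ⟨zero_le_one' ℝ, (Set.mem_Ioi.1 hz).le⟩
  have hBpos : ∀ z, 0 < z → 0 < B z := by
    intro z hz
    by_contra! hle
    have h1 := hpj_max 1 z zero_le_one hz.le
    have h2 : gpj 1 z ≤ 1 := by simp only [hBdef] at hle; linarith
    have h3 := hajp.2 ⟨⟨hz.le, (le_max_right _ _).trans (h1.trans h2)⟩,
      le_antisymm h2 ((le_max_left _ _).trans h1)⟩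
    linarith
  have hscale : ∀ s x, 0 < s → 0 ≤ x → gpj s x - s = s * B (x / s) := by
    intro s x hs hx
    have := hpj_hom s 1 (x / s) hs.le zero_le_one (by positivity)
    rw [mul_one, mul_div_cancel₀ _ hs.ne'] at this
    simp only [hBdef]
    rw [this]; ring
  have hfar : ∀ b, api < b → ∃ c, 0 < c ∧ ∀ s, b ≤ s → c ≤ gip 1 s - 1 := by
    intro b hb
    have hcont : ContinuousOn (fun s => gip 1 s - 1) (Set.Icc b (b + 2)) := by
      refine ContinuousOn.sub ?_ continuousOn_const
      exact hip_cont.comp (f := fun z : ℝ => ((1 : ℝ), z)) (by fun_prop)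
        fun z hz => ⟨zero_le_one' ℝ, (hapi_pos.trans hb).le.trans hz.1⟩
    obtain ⟨m, hm, hmin⟩ := isCompact_Icc.exists_isMinOn
      (Set.nonempty_Icc.2 (by linarith)) hcont
    have hm0 : 0 < gip 1 m - 1 := by
      by_contra! hle
      have hm0 : 0 ≤ m := (hapi_pos.trans hb).le.trans hm.1
      have h1 := hip_max 1 m zero_le_one hm0
      have h2 : gip 1 m ≤ 1 := by linarith
      have h3 := hapi.2 ⟨⟨hm0, (le_max_right _ _).trans (h1.trans h2)⟩,
        le_antisymm h2 ((le_max_left _ _).trans h1)⟩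
      linarith [hm.1]
    refine ⟨min (gip 1 m - 1) 1, lt_min hm0 one_pos, fun s hs => ?_⟩
    rcases le_total s (b + 2) with h | h
    · exact (min_le_left _ _).trans (hmin ⟨hs, h⟩)
    · have h1 := (le_max_right _ _).trans (hip_max 1 s zero_le_one (by linarith))
      exact (min_le_right _ _).trans (by linarith)
  have hnear : ∀ M, 0 ≤ M → ∃ c, 0 < c ∧ ∀ t, 0 ≤ t → t ≤ M → c ≤ gpj t 1 - t := by
    intro M hM
    have hcont : ContinuousOn (fun t => gpj t 1 - t) (Set.Icc 0 M) := by
      refine ContinuousOn.sub ?_ continuousOn_id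
      exact hpj_cont.comp (f := fun z : ℝ => (z, (1 : ℝ))) (by fun_prop)
        fun z hz => ⟨hz.1, zero_le_one' ℝ⟩
    obtain ⟨m, hm, hmin⟩ := isCompact_Icc.exists_isMinOn (Set.nonempty_Icc.2 hM) hcont
    refine ⟨gpj m 1 - m, ?_, fun t h0 h1 => hmin ⟨h0, h1⟩⟩
    rcases hm.1.eq_or_lt with h | h
    · have := (le_max_right _ _).trans (hpj_max 0 1 le_rfl zero_le_one)
      rw [← h]; linarith
    · rw [hscale m 1 h zero_le_one]
      exact mul_pos h (hBpos _ (by positivity))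
  have hs_le : ∀ s x, 0 ≤ s → 0 ≤ x → 0 ≤ gpj s x - s := fun s x hs hx =>
    sub_nonneg.2 ((le_max_left _ _).trans (hpj_max s x hs hx))
  have ha_le : ∀ s, 0 ≤ s → 0 ≤ gip 1 s - 1 := fun s hs =>
    sub_nonneg.2 ((le_max_left _ _).trans (hip_max 1 s zero_le_one hs))
  have hupper : ∀ x, 0 < x → gij 1 x - 1 ≤ api * B (x / api) := by
    intro x hx
    rw [hgij, ← hscale api x hapi_pos hx.le]
    have : sInf {r | ∃ s : ℝ, 0 ≤ s ∧ r = gip 1 s + gpj s x - s}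
        ≤ gip 1 api + gpj api x - api := by
      refine csInf_le ⟨1, ?_⟩ ⟨api, hapi_pos.le, rfl⟩
      rintro r ⟨s, hs, rfl⟩
      linarith [hs_le s x hs hx.le, ha_le s hs]
    linarith
  have hlower : ∀ η, 0 < η → ∀ᶠ x in 𝓝[>] (0 : ℝ),
      Real.exp (-η) * (api * B (x / api)) ≤ gij 1 x - 1 := by
    intro η hη
    obtain ⟨ℓ, hℓ, z₀, hz₀, hC⟩ := hB.almost_mono_s17 hBc hBpos hσb hη
    obtain ⟨c₁, hc₁, hfar'⟩ := hfar (api * Real.exp ℓ)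
      (lt_mul_of_one_lt_right hapi_pos (Real.one_lt_exp_iff.2 hℓ))
    obtain ⟨c₂, hc₂, hnear'⟩ := hnear (1 / z₀) (by positivity)
    have hdiv : Tendsto (fun x : ℝ => x / api) (𝓝[>] 0) (𝓝[>] 0) := by
      refine tendsto_nhdsWithin_iff.2 ⟨?_, ?_⟩
      · have : Tendsto (fun x : ℝ => x / api) (𝓝 0) (𝓝 (0 / api)) := tendsto_id.div_const api
        rw [zero_div] at this
        exact this.mono_left nhdsWithin_le_nhds
      · filter_upwards [self_mem_nhdsWithin] with x hx
        exact div_pos hx hapi_pos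
    have hsmall := (hB.tendsto_div_self hBc hBpos hσb).comp hdiv
    filter_upwards [self_mem_nhdsWithin, hsmall.eventually (gt_mem_nhds (lt_min hc₁ hc₂)),
      hdiv.eventually (Ioc_mem_nhdsGT hz₀), Ioc_mem_nhdsGT one_pos] with x hx0 hxC hxz hx1
    have hx : 0 < x := hx0
    have hx1' : x ≤ 1 := hx1.2
    have hxz' : x / api ≤ z₀ := hxz.2
    simp only [Function.comp] at hxC
    set K := B (x / api) / (x / api) with hK
    have hK0 : 0 < K := div_pos (hBpos _ hxz.1) hxz.1
    have hP : api * B (x / api) = x * K := by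
      rw [hK]; field_simp
    have hexp : Real.exp (-η) ≤ 1 := Real.exp_le_one_iff.2 (by linarith)
    have hexpP : Real.exp (-η) * (x * K) ≤ x * K :=
      mul_le_of_le_one_left (by positivity) hexp
    have hKc₁ : K ≤ c₁ := hxC.le.trans (min_le_left _ _)
    have hKc₂ : K ≤ c₂ := hxC.le.trans (min_le_right _ _)
    rw [hP, hgij, le_sub_iff_add_le]
    refine le_csInf ⟨_, 0, le_rfl, rfl⟩ ?_
    rintro r ⟨s, hs, rfl⟩
    suffices Real.exp (-η) * (x * K) ≤ (gip 1 s - 1) + (gpj s x - s) by linarith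
    have hg := hs_le s x hs hx.le
    have ha := ha_le s hs
    rcases le_total (api * Real.exp ℓ) s with hsfar | hsfar
    · have h1 := hfar' s hsfar
      have h2 : x * K ≤ K := mul_le_of_le_one_left hK0.le hx1'
      linarith
    rcases le_or_gt (s / x) (1 / z₀) with hsnear | hsnear
    · have h1 := hnear' (s / x) (by positivity) hsnear
      have h2 := hpj_hom x (s / x) 1 hx.le (by positivity) zero_le_one
      rw [mul_one, mul_div_cancel₀ _ hx.ne'] at h2
      have h3 : gpj s x - s = x * (gpj (s / x) 1 - s / x) := by
        rw [h2]; field_simp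
      have h4 : x * K ≤ x * (gpj (s / x) 1 - s / x) :=
        mul_le_mul_of_nonneg_left (hKc₂.trans h1) hx.le
      linarith
    · have hs0 : 0 < s := by
        by_contra! hle
        have : s / x ≤ 0 := div_nonpos_of_nonpos_of_nonneg hle hx.le
        have : 0 < 1 / z₀ := by positivity
        linarith
      have hw : x / s ≤ z₀ := by
        rw [div_lt_div_iff₀ hz₀ hx] at hsnear
        rw [div_le_iff₀ hs0]; linarith
      have hzw : Real.exp (-ℓ) * (x / api) ≤ x / s := by
        rw [Real.exp_neg, le_div_iff₀ hs0]
        have he := Real.exp_pos ℓ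
        calc (Real.exp ℓ)⁻¹ * (x / api) * s
            ≤ (Real.exp ℓ)⁻¹ * (x / api) * (api * Real.exp ℓ) := by gcongr
          _ = x := by field_simp
      have h1 := hC (x / api) (x / s) hxz.1 hxz' (by positivity) hw hzw
      have h2 : gpj s x - s = x * (B (x / s) / (x / s)) := by
        rw [hscale s x hs0 hx.le]; field_simp
      have h3 := mul_le_mul_of_nonneg_left h1 hx.le
      rw [← h2, mul_left_comm, ← hK] at h3
      linarith
  have hPpos : ∀ x, 0 < x → 0 < api * B (x / api) := fun x hx =>
    mul_pos hapi_pos (hBpos _ (div_pos hx hapi_pos))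
  have hratio : Tendsto (fun x => (gij 1 x - 1) / (api * B (x / api))) (𝓝[>] 0) (𝓝 1) := by
    refine tendsto_order.2 ⟨fun p hp => ?_, fun p hp => ?_⟩
    · -- choose `η` with `p < exp (-η) < 1`
      have hcont : Tendsto (fun η : ℝ => Real.exp (-η)) (𝓝[>] 0) (𝓝 1) := by
        have : Continuous fun η : ℝ => Real.exp (-η) := by fun_prop
        simpa using (this.tendsto 0).mono_left nhdsWithin_le_nhds
      obtain ⟨η, hpη, hη⟩ := ((hcont.eventually (lt_mem_nhds hp)).and
        self_mem_nhdsWithin).exists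
      filter_upwards [hlower η hη, self_mem_nhdsWithin] with x h hx
      exact hpη.trans_le ((le_div_iff₀ (hPpos x hx)).2 h)
    · filter_upwards [self_mem_nhdsWithin] with x hx
      exact ((div_le_one (hPpos x hx)).2 (hupper x hx)).trans_lt hp
  refine ⟨hratio, fun l hl => ?_⟩
  have hdil : ∀ c : ℝ, 0 < c → Tendsto (fun x : ℝ => c * x) (𝓝[>] 0) (𝓝[>] 0) := by
    intro c hc
    refine tendsto_nhdsWithin_iff.2 ⟨?_, ?_⟩
    · have : Tendsto (fun x : ℝ => c * x) (𝓝 0) (𝓝 (c * 0)) := tendsto_id.const_mul c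
      rw [mul_zero] at this
      exact this.mono_left nhdsWithin_le_nhds
    · filter_upwards [self_mem_nhdsWithin] with x hx
      exact mul_pos hc hx
  have h1 := hratio.comp (hdil l hl)
  have h2 := (hB l hl).comp (hdil api⁻¹ (by positivity))
  have h3 := (h1.mul h2).mul (hratio.inv₀ one_ne_zero)
  rw [one_mul, inv_one, mul_one] at h3
  refine h3.congr' ?_
  filter_upwards [self_mem_nhdsWithin] with x hx
  have hx' : 0 < x := hx
  have e1 : B (l * (api⁻¹ * x)) = B (l * x / api) := by congr 1; field_simp
  have e2 : B (api⁻¹ * x) = B (x / api) := by congr 1; field_simp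
  have p1 := (hBpos (l * x / api) (by positivity)).ne'
  have p2 := (hBpos (x / api) (by positivity)).ne'
  simp only [Function.comp]
  rw [e1, e2, inv_div]
  rcases eq_or_ne (gij 1 x - 1) 0 with h0 | h0
  · rw [h0]; simp
  · field_simp
end

section
/- In the two-edge chain setting, suppose α_{π|i} = 0, α_{j|π} = 0, σ_a > 1 and σ_b > 1. Then the minimized function f(x) = g_{ij}(1, x) − 1 = inf_{ε ≥ 0} [ A⁺(ε) + (g_{πj}(ε, x) − ε) ] is regularly varying at 0+ with index ρ = σ_a·σ_b/(σ_a + σ_b − 1); equivalently, β_{j|i} = β_{π|i}·β_{j|π}. -/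
/-!
Write `A s = gip 1 s - 1` and `B z = gpj 1 z - 1`. By homogeneity the function to study is
`f x = inf_s (A s + s * B (x / s))` (with a term at least `x` for `s = 0`). If `s` is nearly optimal
for `x`, then `l ^ θ * s`, with `θ = b / (a + b - 1)`, is a good competitor for `l * x`: regular
variation turns `A (l ^ θ * s)` into about `l ^ (θ * a) * A s` and
`l ^ θ * s * B (l ^ (1 - θ) * (x / s))` into about `l ^ (θ + (1 - θ) * b) * (s * B (x / s))`, and
`θ` is chosen so that both exponents are `ρ = a * b / (a + b - 1)`. Hence `f (l * x) ≤ C * f x` for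
small `x` whenever `C > l ^ ρ` (`infConv_scale_le`); the same bound with `l⁻¹` gives the
reverse inequality. Only fixed multipliers occur, so no uniform convergence theorem is needed.

What has to be checked is that near-optimal `s` satisfy `s → 0` and `x / s → 0`. This follows from
`f x = o(x)` (`infConv_small`), because `A` is bounded below away from `0` and
`s * B (x / s) ≥ c * x` when `x / s` stays away from `0` (`edge_lower`). The bound `f x = o(x)` comes
from `s = M * x` and from `A y / y → 0`, `B z / z → 0`, which hold since the indices exceed `1`
(`rv0_div_tendsto_zero`).
-/


open Filter Topology

/-- Regular variation of a positive function gives the one-sided bound for a fixed multiplier. -/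
lemma rv0_upper {F : ℝ → ℝ} {σ : ℝ} (hF : RV0 F σ) (hpos : ∀ y, 0 < y → 0 < F y)
    {l C : ℝ} (hl : 0 < l) (hC : l ^ σ < C) :
    ∃ η > 0, ∀ y, 0 < y → y < η → F (l * y) ≤ C * F y := by
  have h := (hF l hl).eventually_lt_const hC
  rw [eventually_nhdsWithin_iff, Metric.eventually_nhds_iff] at h
  obtain ⟨η, hη, h⟩ := h
  refine ⟨η, hη, fun y hy hyη => ?_⟩
  have := h (y := y) (by rw [Real.dist_eq, sub_zero, abs_of_pos hy]; exact hyη) hy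
  rw [div_lt_iff₀ (hpos y hy)] at this
  exact this.le

/-- A continuous positive function, regularly varying with index greater than `1`, is `o(y)`:
`F y / y` is bounded on a compact interval and contracts by a fixed factor under halving. -/
lemma rv0_div_tendsto_zero {F : ℝ → ℝ} {σ : ℝ} (hc : ContinuousOn F (Set.Ici 0))
    (hF : RV0 F σ) (hpos : ∀ y, 0 < y → 0 < F y) (hσ : 1 < σ) {e : ℝ} (he : 0 < e) :
    ∃ η > 0, ∀ y, 0 < y → y < η → F y ≤ e * y := by
  have hlt : (2⁻¹ : ℝ) ^ σ < 2⁻¹ := by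
    have := Real.rpow_lt_rpow_of_exponent_gt (x := (2⁻¹ : ℝ)) (by norm_num) (by norm_num) hσ
    rwa [Real.rpow_one] at this
  have h0 : (0 : ℝ) < (2⁻¹ : ℝ) ^ σ := by positivity
  obtain ⟨C, hC1, hC2⟩ := exists_between hlt
  have hC0 : 0 < C := h0.trans hC1
  obtain ⟨η, hη, h⟩ := rv0_upper hF hpos (by norm_num) hC1
  set y0 := η / 2 with hy0
  have hy0pos : 0 < y0 := by positivity
  have hstep : ∀ y, 0 < y → y ≤ 2 * y0 → y < 2 * y0 → F (y / 2) ≤ C * F y := by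
    intro y hy _ hyy
    have := h y hy (by linarith)
    rwa [show (2⁻¹ : ℝ) * y = y / 2 by ring] at this
  obtain ⟨K, hK⟩ : ∃ K, ∀ y ∈ Set.Icc (y0 / 2) y0, F y ≤ K := by
    obtain ⟨K, hK⟩ := (isCompact_Icc (a := y0 / 2) (b := y0)).bddAbove_image
      (hc.mono (fun y hy => (by linarith [hy.1] : (0 : ℝ) ≤ y)))
    exact ⟨K, fun y hy => hK ⟨y, hy, rfl⟩⟩
  have hK0 : 0 < K := (hpos y0 hy0pos).trans_le (hK y0 ⟨by linarith, le_rfl⟩)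
  set L := 2 * K / y0 with hL
  have hL0 : 0 < L := by positivity
  -- Boundedness of `F y / y` on `(0, y0]`.
  have hbd : ∀ n : ℕ, ∀ y, 0 < y → y0 ≤ 2 ^ (n + 1) * y → y ≤ y0 → F y ≤ L * y := by
    intro n
    induction n with
    | zero =>
      intro y hy h1 h2
      have h1' : y0 / 2 ≤ y := by norm_num at h1; linarith
      calc F y ≤ K := hK y ⟨h1', h2⟩
        _ = L * (y0 / 2) := by rw [hL]; field_simp
        _ ≤ L * y := by gcongr
    | succ n ih =>
      intro y hy h1 h2
      rcases le_or_gt (2 * y) y0 with h3 | h3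
      · have h4 := ih (2 * y) (by positivity) (by rw [pow_succ] at h1; linarith) h3
        have h5 := hstep (2 * y) (by positivity) (by linarith) (by linarith)
        rw [show 2 * y / 2 = y by ring] at h5
        have h6 := mul_le_mul_of_nonneg_left h4 hC0.le
        have h7 : C * (L * (2 * y)) ≤ 2⁻¹ * (L * (2 * y)) := by gcongr
        linarith
      · calc F y ≤ K := hK y ⟨by linarith, h2⟩
          _ = L * (y0 / 2) := by rw [hL]; field_simp
          _ ≤ L * y := by gcongr; linarith
  have hbd' : ∀ y, 0 < y → y ≤ y0 → F y ≤ L * y := by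
    intro y hy h2
    obtain ⟨n, hn⟩ := pow_unbounded_of_one_lt (y0 / y) (one_lt_two (α := ℝ))
    refine hbd n y hy ?_ h2
    rw [div_lt_iff₀ hy] at hn
    rw [pow_succ]
    nlinarith [pow_pos (two_pos (α := ℝ)) n]
  -- Geometric decay of `F y / y` along the scales `y0 / 2 ^ n`, since `2 * C < 1`.
  have hdec : ∀ n : ℕ, ∀ y, 0 < y → 2 ^ n * y ≤ y0 → F y ≤ (2 * C) ^ n * L * y := by
    intro n
    induction n with
    | zero => intro y hy h1; simpa using hbd' y hy (by simpa using h1)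
    | succ n ih =>
      intro y hy h1
      have h4 := ih (2 * y) (by positivity) (by rw [pow_succ] at h1; linarith)
      have h8 : (1 : ℝ) ≤ 2 ^ n := one_le_pow₀ (by norm_num)
      have h9 : 2 * y ≤ y0 := by rw [pow_succ] at h1; nlinarith
      have h5 := hstep (2 * y) (by positivity) (by linarith) (by linarith)
      rw [show 2 * y / 2 = y by ring] at h5
      have h6 := mul_le_mul_of_nonneg_left h4 hC0.le
      calc F y ≤ _ := h5.trans h6
        _ = _ := by ring
  obtain ⟨n, hn⟩ := exists_pow_lt_of_lt_one (div_pos he hL0) (show 2 * C < 1 by linarith)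
  refine ⟨y0 / 2 ^ n, by positivity, fun y hy hyn => ?_⟩
  rw [lt_div_iff₀ (by positivity)] at hyn
  rw [lt_div_iff₀ hL0] at hn
  calc F y ≤ (2 * C) ^ n * L * y := hdec n y hy (by linarith)
    _ ≤ e * y := by gcongr

/-- Away from `0`, a continuous positive function with `F y ≥ y - 1` is bounded below both by a
positive constant and by a positive multiple of the identity. -/
lemma edge_lower {F : ℝ → ℝ} (hc : ContinuousOn F (Set.Ici 0)) (hpos : ∀ y, 0 < y → 0 < F y)
    (hlin : ∀ y, 0 < y → y - 1 ≤ F y) {η : ℝ} (hη : 0 < η) :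
    ∃ c > 0, ∀ z, η ≤ z → c ≤ F z ∧ c * z ≤ F z := by
  set M := max η 2 with hM
  have hM2 : 2 ≤ M := le_max_right _ _
  obtain ⟨m, hm, hmin⟩ := (isCompact_Icc (a := η) (b := M)).exists_isMinOn
    ⟨η, le_rfl, le_max_left _ _⟩ (hc.mono (fun y hy => (by linarith [hy.1] : (0 : ℝ) ≤ y)))
  have hk : 0 < F m := hpos m (hη.trans_le hm.1)
  refine ⟨min (1 / 2) (F m / M), by positivity, fun z hz => ?_⟩
  have hz0 : 0 < z := hη.trans_le hz
  have c1 := min_le_left (1 / 2) (F m / M)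
  have c2 := min_le_right (1 / 2) (F m / M)
  rcases le_or_gt z M with hzM | hzM
  · have hz' : F m ≤ F z := hmin ⟨hz, hzM⟩
    have e1 : F m / M * M = F m := by field_simp
    have e0 : 0 < F m / M := by positivity
    constructor
    · nlinarith
    · calc _ ≤ F m / M * M := by gcongr
        _ ≤ F z := by rw [e1]; exact hz'
  · have := hlin z hz0
    constructor
    · linarith
    · nlinarith

section infConv

variable {A B f : ℝ → ℝ} {a b : ℝ}

/-- The infimum `f` is positive. -/
lemma infConv_pos
    (hAc : ContinuousOn A (Set.Ici 0)) (hBc : ContinuousOn B (Set.Ici 0))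
    (hApos : ∀ y, 0 < y → 0 < A y) (hBpos : ∀ y, 0 < y → 0 < B y)
    (hAlin : ∀ y, 0 < y → y - 1 ≤ A y) (hBlin : ∀ y, 0 < y → y - 1 ≤ B y)
    (hex : ∀ x v, 0 < x → f x < v → x < v ∨ ∃ s, 0 < s ∧ A s + s * B (x / s) < v)
    {x : ℝ} (hx : 0 < x) : 0 < f x := by
  obtain ⟨ca, hca, hA⟩ := edge_lower hAc hApos hAlin hx
  obtain ⟨cb, hcb, hB⟩ := edge_lower hBc hBpos hBlin one_pos
  by_contra! hf
  have hv : 0 < min x (min ca (cb * x)) := by positivity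
  have v1 := min_le_left x (min ca (cb * x))
  have v2 := (min_le_right x (min ca (cb * x))).trans (min_le_left _ _)
  have v3 := (min_le_right x (min ca (cb * x))).trans (min_le_right _ _)
  rcases hex x _ hx (hf.trans_lt hv) with h | ⟨s, hs, h⟩
  · linarith
  · have h1 := hApos s hs
    have h2 : 0 < s * B (x / s) := mul_pos hs (hBpos _ (by positivity))
    rcases le_or_gt x s with h3 | h3
    · linarith [(hA s h3).1]
    · have h4 := (hB (x / s) ((one_le_div hs).2 h3.le)).2
      have h5 : s * (cb * (x / s)) ≤ s * B (x / s) := by gcongr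
      rw [show s * (cb * (x / s)) = cb * x by field_simp] at h5
      linarith

/-- `f x = o(x)`: the competitor `s = x / z` with `z` small and fixed shows this. -/
lemma infConv_small
    (hAc : ContinuousOn A (Set.Ici 0)) (hBc : ContinuousOn B (Set.Ici 0))
    (hApos : ∀ y, 0 < y → 0 < A y) (hBpos : ∀ y, 0 < y → 0 < B y)
    (hA : RV0 A a) (hB : RV0 B b) (ha : 1 < a) (hb : 1 < b)
    (hle : ∀ x s, 0 < x → 0 < s → f x ≤ A s + s * B (x / s)) {e : ℝ} (he : 0 < e) :
    ∃ η > 0, ∀ x, 0 < x → x < η → f x < e * x := by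
  obtain ⟨η1, hη1, h1⟩ := rv0_div_tendsto_zero hBc hB hBpos hb (e := e / 3) (by positivity)
  set z := η1 / 2 with hz
  have hz0 : 0 < z := by positivity
  obtain ⟨η2, hη2, h2⟩ := rv0_div_tendsto_zero hAc hA hApos ha (e := e / 3 * z) (by positivity)
  refine ⟨η2 * z, by positivity, fun x hx hxη => ?_⟩
  have hs : 0 < x / z := by positivity
  have k1 := hle x (x / z) hx hs
  have k2 := h2 (x / z) hs ((div_lt_iff₀ hz0).2 hxη)
  have k3 : x / z * B (x / (x / z)) ≤ x / z * (e / 3 * z) := by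
    rw [show x / (x / z) = z by field_simp]
    gcongr
    exact h1 z hz0 (by linarith)
  rw [show e / 3 * z * (x / z) = e / 3 * x by field_simp] at k2
  rw [show x / z * (e / 3 * z) = e / 3 * x by field_simp] at k3
  have : 0 < e * x := by positivity
  linarith

/-- The one-sided bound `f (l * x) ≤ C * f x` near `0`, for every `C > l ^ ρ`. -/
lemma infConv_scale_le
    (hAc : ContinuousOn A (Set.Ici 0)) (hBc : ContinuousOn B (Set.Ici 0))
    (hApos : ∀ y, 0 < y → 0 < A y) (hBpos : ∀ y, 0 < y → 0 < B y)
    (hAlin : ∀ y, 0 < y → y - 1 ≤ A y) (hBlin : ∀ y, 0 < y → y - 1 ≤ B y)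
    (hA : RV0 A a) (hB : RV0 B b) (ha : 1 < a) (hb : 1 < b)
    (hle : ∀ x s, 0 < x → 0 < s → f x ≤ A s + s * B (x / s))
    (hex : ∀ x v, 0 < x → f x < v → x < v ∨ ∃ s, 0 < s ∧ A s + s * B (x / s) < v)
    {l C : ℝ} (hl : 0 < l) (hC : l ^ (a * b / (a + b - 1)) < C) :
    ∃ η > 0, ∀ x, 0 < x → x < η → f (l * x) ≤ C * f x := by
  have hab : 0 < a + b - 1 := by linarith
  set θ := b / (a + b - 1) with hθ
  set t := l ^ θ with ht
  have ht0 : 0 < t := Real.rpow_pos_of_pos hl _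
  have hC0 : 0 < C := (Real.rpow_pos_of_pos hl _).trans hC
  have hta : t ^ a < C := by
    rw [ht, ← Real.rpow_mul hl.le]
    rwa [show θ * a = a * b / (a + b - 1) by rw [hθ]; ring]
  have htb : (l / t) ^ b < C / t := by
    have e1 : l / t = l ^ (1 - θ) := by rw [Real.rpow_sub hl, Real.rpow_one]
    rw [lt_div_iff₀ ht0, e1, ← Real.rpow_mul hl.le, ht, ← Real.rpow_add hl]
    rwa [show (1 - θ) * b + θ = a * b / (a + b - 1) by rw [hθ]; field_simp; ring]
  obtain ⟨η1, hη1, h1⟩ := rv0_upper hA hApos ht0 hta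
  obtain ⟨η2, hη2, h2⟩ := rv0_upper hB hBpos (div_pos hl ht0) htb
  obtain ⟨ca, hca, hcA⟩ := edge_lower hAc hApos hAlin hη1
  obtain ⟨cb, hcb, hcB⟩ := edge_lower hBc hBpos hBlin hη2
  set e := min (1 / 2) (cb / 2) with he
  have he0 : 0 < e := by positivity
  have e1 : e ≤ 1 / 2 := min_le_left _ _
  have e2 : e ≤ cb / 2 := min_le_right _ _
  obtain ⟨η3, hη3, h3⟩ := infConv_small hAc hBc hApos hBpos hA hB ha hb hle he0
  refine ⟨min η3 ca, by positivity, fun x hx hxη => ?_⟩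
  have hf0 : 0 < f x := infConv_pos hAc hBc hApos hBpos hAlin hBlin hex hx
  have hfs := h3 x hx (hxη.trans_le (min_le_left _ _))
  have hxca := hxη.trans_le (min_le_right η3 ca)
  by_contra! hcon
  -- Some `s` beats both levels: the first keeps `s` and `x / s` small, the second is contradicted by
  -- the competitor `t * s` for `l * x`.
  have hv : f x < min (2 * f x) (f (l * x) / C) :=
    lt_min (by linarith) (by rw [lt_div_iff₀ hC0]; linarith)
  have v1 := min_le_left (2 * f x) (f (l * x) / C)
  have v2 := min_le_right (2 * f x) (f (l * x) / C)
  have hex1 : e * x ≤ 1 / 2 * x := by gcongr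
  have hex2 : e * x ≤ cb / 2 * x := by gcongr
  rcases hex x _ hx hv with h | ⟨s, hs, h⟩
  · linarith
  have hxs : 0 < x / s := by positivity
  have p1 := hApos s hs
  have p2 : 0 < s * B (x / s) := mul_pos hs (hBpos _ hxs)
  have hsη : s < η1 := by
    by_contra! hge
    linarith [(hcA s hge).1]
  have hzη : x / s < η2 := by
    by_contra! hge
    have h5 : s * (cb * (x / s)) ≤ s * B (x / s) := by
      gcongr
      exact (hcB _ hge).2
    rw [show s * (cb * (x / s)) = cb * x by field_simp] at h5
    linarith
  have k1 := hle (l * x) (t * s) (by positivity) (by positivity)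
  have k2 := h1 s hs hsη
  have k3 : t * s * B (l * x / (t * s)) ≤ t * s * (C / t * B (x / s)) := by
    rw [show l * x / (t * s) = l / t * (x / s) by field_simp]
    gcongr
    exact h2 _ hxs hzη
  rw [show t * s * (C / t * B (x / s)) = C * (s * B (x / s)) by field_simp] at k3
  have k4 : (A s + s * B (x / s)) * C < f (l * x) := by
    rw [← lt_div_iff₀ hC0]; linarith
  linarith

/-- Regular variation of the infimum `f`. The hypotheses `hle` and `hex` say that `f x` is the
infimum of `A s + s * B (x / s)` over `s > 0` and possibly of a further value that is at
least `x`. -/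
lemma infConv_rv0
    (hAc : ContinuousOn A (Set.Ici 0)) (hBc : ContinuousOn B (Set.Ici 0))
    (hApos : ∀ y, 0 < y → 0 < A y) (hBpos : ∀ y, 0 < y → 0 < B y)
    (hAlin : ∀ y, 0 < y → y - 1 ≤ A y) (hBlin : ∀ y, 0 < y → y - 1 ≤ B y)
    (hA : RV0 A a) (hB : RV0 B b) (ha : 1 < a) (hb : 1 < b)
    (hle : ∀ x s, 0 < x → 0 < s → f x ≤ A s + s * B (x / s))
    (hex : ∀ x v, 0 < x → f x < v → x < v ∨ ∃ s, 0 < s ∧ A s + s * B (x / s) < v) :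
    RV0 f (a * b / (a + b - 1)) := by
  have hf0 : ∀ x, 0 < x → 0 < f x :=
    fun x hx => infConv_pos hAc hBc hApos hBpos hAlin hBlin hex hx
  have ev : ∀ {P : ℝ → Prop}, (∃ η > 0, ∀ x, 0 < x → x < η → P x) → ∀ᶠ x in 𝓝[>] (0 : ℝ), P x := by
    rintro P ⟨η, hη, h⟩
    filter_upwards [Ioo_mem_nhdsGT hη] with x hx using h x hx.1 hx.2
  intro l hl
  set ρ := a * b / (a + b - 1) with hρ
  have hlρ : 0 < l ^ ρ := Real.rpow_pos_of_pos hl _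
  refine tendsto_order.2 ⟨fun u hu => ?_, fun u hu => ?_⟩
  · -- The bound for the multiplier `l⁻¹` at the point `l * x`.
    obtain ⟨u', hu1, hu2⟩ := exists_between (max_lt hu hlρ)
    have hu0 : 0 < u' := (le_max_right _ _).trans_lt hu1
    have hC : l⁻¹ ^ ρ < u'⁻¹ := by
      rw [Real.inv_rpow hl.le]
      exact inv_strictAnti₀ hu0 hu2
    obtain ⟨η, hη, h⟩ := infConv_scale_le hAc hBc hApos hBpos hAlin hBlin hA hB ha hb hle hex
      (inv_pos.2 hl) hC
    refine ev ⟨η / l, by positivity, fun x hx hxη => ?_⟩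
    have := h (l * x) (by positivity) (by rw [lt_div_iff₀ hl] at hxη; linarith)
    rw [inv_mul_cancel_left₀ hl.ne', ← div_eq_inv_mul, le_div_iff₀ hu0] at this
    refine ((le_max_left _ _).trans_lt hu1).trans_le ?_
    rw [le_div_iff₀ (hf0 x hx)]
    linarith
  · obtain ⟨C, hC1, hC2⟩ := exists_between hu
    obtain ⟨η, hη, h⟩ := infConv_scale_le hAc hBc hApos hBpos hAlin hBlin hA hB ha hb hle hex
      hl hC1
    refine ev ⟨η, hη, fun x hx hxη => ?_⟩
    refine lt_of_le_of_lt ?_ hC2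
    rw [div_le_iff₀ (hf0 x hx)]
    exact h x hx hxη

end infConv

/-- Continuity, positivity and linear growth of `y ↦ g 1 y - 1` for one edge with `α = 0`. -/
lemma edge_basic {g : ℝ → ℝ → ℝ}
    (hcont : ContinuousOn (fun p : ℝ × ℝ => g p.1 p.2) (Set.Ici 0 ×ˢ Set.Ici 0))
    (hmax : ∀ u v : ℝ, 0 ≤ u → 0 ≤ v → max u v ≤ g u v)
    (hα : IsGreatest {y | y ∈ Set.Icc (0:ℝ) 1 ∧ g 1 y = 1} 0) :
    ContinuousOn (fun y => g 1 y - 1) (Set.Ici 0) ∧ (∀ y, 0 < y → 0 < g 1 y - 1) ∧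
      (∀ y, 0 < y → y - 1 ≤ g 1 y - 1) := by
  refine ⟨?_, fun y hy => ?_, fun y hy => ?_⟩
  · refine ContinuousOn.sub ?_ continuousOn_const
    exact hcont.comp (f := fun y : ℝ => ((1 : ℝ), y)) (by fun_prop)
      (fun y hy => ⟨(zero_le_one : (0 : ℝ) ≤ 1), hy⟩)
  · have h := hmax 1 y zero_le_one hy.le
    have h1 := (le_max_left 1 y).trans h
    have h2 := (le_max_right 1 y).trans h
    by_contra! hcon
    exact absurd (hα.2 ⟨⟨hy.le, by linarith⟩, by linarith⟩) (not_le.2 hy)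
  · have h2 := (le_max_right 1 y).trans (hmax 1 y zero_le_one hy.le)
    linarith

/-- **Subcase D.1 of Lemma 4** (two-edge chain, exponential margins): if
`α_{π|i} = 0`, `α_{j|π} = 0`, `σ_a > 1` and `σ_b > 1`, then
`f(x) = g_{ij}(1, x) − 1` is regularly varying at `0⁺` with index
`ρ = σ_a·σ_b/(σ_a + σ_b − 1)`; equivalently `β_{j|i} = β_{π|i}·β_{j|π}`. -/
theorem stmt_18
    (gip gpj : ℝ → ℝ → ℝ)
    (hip_cont : ContinuousOn (fun p : ℝ × ℝ => gip p.1 p.2) (Set.Ici 0 ×ˢ Set.Ici 0))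
    (hpj_cont : ContinuousOn (fun p : ℝ × ℝ => gpj p.1 p.2) (Set.Ici 0 ×ˢ Set.Ici 0))
    (hip_hom : ∀ t u v : ℝ, 0 ≤ t → 0 ≤ u → 0 ≤ v → gip (t*u) (t*v) = t * gip u v)
    (hpj_hom : ∀ t u v : ℝ, 0 ≤ t → 0 ≤ u → 0 ≤ v → gpj (t*u) (t*v) = t * gpj u v)
    (hip_max : ∀ u v : ℝ, 0 ≤ u → 0 ≤ v → max u v ≤ gip u v)
    (hpj_max : ∀ u v : ℝ, 0 ≤ u → 0 ≤ v → max u v ≤ gpj u v)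
    (api ajp : ℝ)
    (hapi : IsGreatest {y | y ∈ Set.Icc (0:ℝ) 1 ∧ gip 1 y = 1} api)
    (hajp : IsGreatest {y | y ∈ Set.Icc (0:ℝ) 1 ∧ gpj 1 y = 1} ajp)
    (bpi bjp : ℝ)
    (hbpi : bpi ∈ Set.Ico (0:ℝ) 1) (hbjp : bjp ∈ Set.Ico (0:ℝ) 1)
    (hA : RV0 (fun y => gip 1 (api + y) - 1) (1 / (1 - bpi)))
    (hB : RV0 (fun z => gpj 1 (ajp + z) - 1) (1 / (1 - bjp)))
    (gij : ℝ → ℝ → ℝ)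
    (hgij : ∀ u w : ℝ, gij u w = sInf {r | ∃ s : ℝ, 0 ≤ s ∧ r = gip u s + gpj s w - s})
    (hapi_zero : api = 0) (hajp_zero : ajp = 0)
    (sa sb : ℝ) (hsa : sa = 1 / (1 - bpi)) (hsb : sb = 1 / (1 - bjp))
    (hsa1 : 1 < sa) (hsb1 : 1 < sb) :
    RV0 (fun x => gij 1 x - 1) (sa * sb / (sa + sb - 1)) := by
  subst hapi_zero hajp_zero hsa hsb
  simp only [zero_add] at hA hB
  obtain ⟨hAc, hApos, hAlin⟩ := edge_basic hip_cont hip_max hapi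
  obtain ⟨hBc, hBpos, hBlin⟩ := edge_basic hpj_cont hpj_max hajp
  have hscale : ∀ x s : ℝ, 0 < x → 0 < s → gpj s x = s * gpj 1 (x / s) := by
    intro x s hx hs
    rw [← hpj_hom s 1 (x / s) hs.le zero_le_one (by positivity), mul_one,
      mul_div_cancel₀ x hs.ne']
  have hbdd : ∀ x : ℝ, 0 < x →
      BddBelow {r | ∃ s : ℝ, 0 ≤ s ∧ r = gip 1 s + gpj s x - s} := by
    intro x hx
    refine ⟨0, ?_⟩
    rintro r ⟨s, hs, rfl⟩
    have h1 := (le_max_left 1 s).trans (hip_max 1 s zero_le_one hs)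
    have h2 := (le_max_left s x).trans (hpj_max s x hs hx.le)
    linarith
  refine infConv_rv0 hAc hBc hApos hBpos hAlin hBlin hA hB hsa1 hsb1 ?_ ?_
  · intro x s hx hs
    have := csInf_le (hbdd x hx) ⟨s, hs.le, rfl⟩
    rw [← hgij, hscale x s hx hs] at this
    linarith
  · intro x v hx hv
    have hlt : sInf {r | ∃ s : ℝ, 0 ≤ s ∧ r = gip 1 s + gpj s x - s} < v + 1 := by
      rw [← hgij]; linarith
    obtain ⟨r, ⟨s, hs, rfl⟩, hr⟩ := exists_lt_of_csInf_lt (by exact ⟨_, 0, le_rfl, rfl⟩) hlt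
    rcases hs.eq_or_lt with rfl | hs
    · left
      have h1 := (le_max_left 1 0).trans (hip_max 1 0 zero_le_one le_rfl)
      have h2 := (le_max_right 0 x).trans (hpj_max 0 x le_rfl hx.le)
      linarith
    · right
      refine ⟨s, hs, ?_⟩
      rw [hscale x s hx hs] at hr
      linarith
end

section
/- Let V be a finite vertex set, i ∈ V, and let C_1, …, C_N ⊆ V be cliques ordered with the running intersection property with singleton separators D_k ∈ C_k ∩ (C_1 ∪ ⋯ ∪ C_{k−1}) for k = 2, …, N, with i ∈ C_1. Suppose each g_{C_k} : [0,∞)^{C_k} → [0,∞) satisfies g_{C_k}(x_{C_k}) ≥ max_{v∈C_k} x_v, and define g(x) = g_{C_1}(x_{C_1}) + Σ_{k=2}^N ( g_{C_k}(x_{C_k}) − x_{D_k} ). If a vector α ∈ [0,1]^{V∖{i}} satisfies g(x*) = 1, where x* has coordinate 1 at i and coordinates α elsewhere, then: (a) g_{C_1} evaluated at (1 at i, α on C_1 ∖ {i}) equals 1; and (b) for every k = 2, …, N, g_{C_k} evaluated at (α_{D_k} at D_k, α on C_k ∖ {D_k}) equals α_{D_k}. Moreover, if α_{D_k} = 0 for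 some k, then α_v = 0 for every v ∈ C_k. -/
/-!
Every clique gauge dominates the coordinates of its clique, so at the nonnegative vector `x*`
the first gauge is at least `x*_i = 1` and each summand `g_{C_k}(x*) - x*_{D_k}` is nonnegative.
Since these terms add up to `1`, the first equals `1` and every summand vanishes. If moreover
`x*_{D_k} = 0`, then `g_{C_k}(x*) = 0` squeezes all coordinates of `x*` on `C_k` to zero.
-/

/-- **Key decomposition step in the proof of Proposition 2**: for the block gauge
`g(x) = g_{C₁}(x_{C₁}) + Σ_{k=2}^N (g_{C_k}(x_{C_k}) − x_{D_k})` (cliques ordered by the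
running intersection property with singleton separators, `i ∈ C₁`, all clique gauges
dominating the coordinatewise maximum on the nonnegative orthant), if `α ∈ [0,1]^{V∖{i}}`
and the vector `x*` (equal to `1` at `i` and to `α` elsewhere) satisfies `g(x*) = 1`,
then (a) `g_{C₁}(x*) = 1`, (b) `g_{C_k}(x*) = x*_{D_k}` for every `k = 2, …, N`, and
moreover if `x*_{D_k} = 0` then `x*_v = 0` for every `v ∈ C_k`. -/
theorem stmt_19
    {V : Type*} [Fintype V] [DecidableEq V]
    (i : V)
    (N : ℕ) (hN : 1 ≤ N)
    (C : ℕ → Finset V) (D : ℕ → V)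
    (hi : i ∈ C 1)
    (hDk : ∀ k, 2 ≤ k → k ≤ N → D k ∈ C k)
    (hDprev : ∀ k, 2 ≤ k → k ≤ N → D k ∈ (Finset.Icc 1 (k-1)).biUnion C)
    (gC : ℕ → (V → ℝ) → ℝ)
    (hmax : ∀ k, 1 ≤ k → k ≤ N → ∀ x : V → ℝ, (∀ w, 0 ≤ x w) → ∀ w ∈ C k, x w ≤ gC k x)
    (g : (V → ℝ) → ℝ)
    (hg : ∀ x, g x = gC 1 x + ∑ k ∈ Finset.Icc 2 N, (gC k x - x (D k)))
    (α : V → ℝ) (hα : ∀ w, w ≠ i → α w ∈ Set.Icc (0:ℝ) 1)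
    (xstar : V → ℝ) (hxstar : xstar = fun w => if w = i then 1 else α w)
    (hgx : g xstar = 1) :
    gC 1 xstar = 1
      ∧ (∀ k, 2 ≤ k → k ≤ N → gC k xstar = xstar (D k))
      ∧ (∀ k, 2 ≤ k → k ≤ N → xstar (D k) = 0 → ∀ w ∈ C k, xstar w = 0) := by
  have hx0 : ∀ w, 0 ≤ xstar w := by
    intro w
    rw [hxstar]
    by_cases hw : w = i
    · simp [hw]
    · simpa [hw] using (hα w hw).1
  have hxi : xstar i = 1 := by simp [hxstar]
  have h1 : 1 ≤ gC 1 xstar := hxi ▸ hmax 1 le_rfl hN xstar hx0 i hi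
  have hterm : ∀ k ∈ Finset.Icc 2 N, 0 ≤ gC k xstar - xstar (D k) := by
    intro k hk
    obtain ⟨hk2, hkN⟩ := Finset.mem_Icc.mp hk
    exact sub_nonneg.mpr (hmax k (by omega) hkN xstar hx0 _ (hDk k hk2 hkN))
  have hsum := Finset.sum_nonneg hterm
  rw [hg] at hgx
  have hsum0 : ∑ k ∈ Finset.Icc 2 N, (gC k xstar - xstar (D k)) = 0 := by linarith
  have hb : ∀ k, 2 ≤ k → k ≤ N → gC k xstar = xstar (D k) := fun k hk2 hkN =>
    sub_eq_zero.mp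
      ((Finset.sum_eq_zero_iff_of_nonneg hterm).mp hsum0 k (Finset.mem_Icc.mpr ⟨hk2, hkN⟩))
  refine ⟨by linarith, hb, fun k hk2 hkN hD w hw => le_antisymm ?_ (hx0 w)⟩
  calc xstar w ≤ gC k xstar := hmax k (by omega) hkN xstar hx0 w hw
    _ = 0 := (hb k hk2 hkN).trans hD
end
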